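/- arXiv:1502.06338 — 2 statements merged into one kernel-verified Lean document; each statement's English description precedes it below -/
import Mathlib

section
/- (Bound on E[y^n_k y^n_{k'}], critical case α = 1/2.) Let φ : ℕ → ℝ with φ_i ≥ 0, φ_0 = 0, ∑_{i=1}^∞ φ_i = 1, and assume there exists K > 0 such that N^{1/2} ∑_{i=N}^∞ φ_i → K as N → ∞. Set δ = K Γ(1/2)/(1/2), and let (a_n)_{n≥1} satisfy 0 < a_n < 1 and n^{1/2}(1−a_n) → λδ for some λ > 0. Let (ε_k)_{k≥0} be iid real random variables with E[ε_0] = 0 and E[ε_0²] = 1, and for each n define y^n_0 = ε_0 and y^n_k = ε_k + ∑_{i=1}^k a_n φ_i y^n_{k−i} for k ≥ 1. Then for every ε ∈ (0,1) there exists c > 0 such that for every n ≥ 1 and all k, k' ≥ 0: if k = k' then E[(y^n_k)²] ≤ c (1−a_n)^{−ε}, and if k ≠ k' then E[y^n_k y^n_{k'}] ≤ c + c ((1−a_n)² |k−k'|)^{−ε}. -/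
open MeasureTheory ProbabilityTheory Filter Set

/-- Convolution powers of a sequence. -/
noncomputable def convPow (φ : ℕ → ℝ) : ℕ → ℕ → ℝ
  | 0 => fun i => if i = 0 then 1 else 0
  | (l + 1) => fun k => ∑ j ∈ Finset.range (k + 1), convPow φ l j * φ (k - j)

/-- ψ^a_i = ∑_{l=0}^∞ a^l (φ^{*l})_i. -/
noncomputable def psiSeq (a : ℝ) (φ : ℕ → ℝ) (i : ℕ) : ℝ :=
  ∑' l : ℕ, a ^ l * convPow φ l i

/-- Fourier transform of a sequence indexed by ℕ. -/
noncomputable def fourierSeq (f : ℕ → ℝ) (z : ℝ) : ℂ :=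
  ∑' k : ℕ, (f k : ℂ) * Complex.exp (-(2 * Real.pi * Complex.I * k * z))

/-- Mittag-Leffler function E_{α,α}. -/
noncomputable def mittagLeffler (α u : ℝ) : ℝ :=
  ∑' k : ℕ, u ^ k / Real.Gamma (α * k + α)

/-- f^{α,λ}. -/
noncomputable def mlDensity (α lam s : ℝ) : ℝ :=
  lam * s ^ (α - 1) * mittagLeffler α (-lam * s ^ α)

/-- F^{α,λ}. -/
noncomputable def mlCDF (α lam x : ℝ) : ℝ :=
  ∫ s in (0:ℝ)..x, mlDensity α lam s

/-!
Inverting the recursion gives `y k = ∑ j ≤ k, ψ (k - j) * ε j` with `ψ = ∑ l, a ^ l • φ^{*l}`, so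
that `E[y k * y (k + m)] = ∑ i ≤ k, ψ i * ψ (i + m)`, a double geometric sum of the correlations
`∑ i, φ^{*l} i * φ^{*l'} (i + m)`. Write `L = max l l' + 1`; for tails of order `N ^ (-α)` two
bounds on these correlations compete.

* Concentration: `φ^{*l} ≤ C * (l + 1) ^ (-1 / α)`. By Fourier inversion this is a bound on the
  integral of `exp (-(l + 1) * E / 2)` up to a constant, where `E = 1 - |φ̂|²` satisfies
  `E t ≥ c * |t| ^ α` near `0`. The inequality `E (t - s) ≤ 2 * E t + 2 * E s` transports this lower
  bound to a minimiser of `E` on any short interval, and so controls also the frequencies away from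
  `0` at which `|φ̂|` may return to `1`. Hence the correlation is at most of order `L ^ (-1 / α)`.
* Tails: Markov's inequality for the subadditive function `min · x` shows that `φ^{*l}` has mass at
  most of order `l * x ^ (-α)` beyond `x`. Hence the correlation is at most of order
  `L ^ (1 - 1 / α) * m ^ (-α)`.

Interpolating with a small weight `θ` gives `L ^ (θ - 1 / α) * m ^ (-α * θ)`. At `α = 1 / 2`, after
counting the `2 * L - 1` pairs with a given maximum, what remains is
`∑ L, a ^ L * L ^ (θ - 1)`, which is of order `(1 - a) ^ (-θ)`, times `m ^ (-θ / 2)`.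
-/

/-! ### Convolution powers -/

section ConvPow

variable {φ : ℕ → ℝ}

lemma convPow_eq_coeff (φ : ℕ → ℝ) (l k : ℕ) :
    convPow φ l k = PowerSeries.coeff k (PowerSeries.mk φ ^ l) := by
  induction l generalizing k with
  | zero => simp [convPow, PowerSeries.coeff_one]
  | succ l ih =>
    rw [pow_succ, PowerSeries.coeff_mul, Finset.Nat.sum_antidiagonal_eq_sum_range_succ_mk]
    simp only [convPow, ih, PowerSeries.coeff_mk]

lemma convPow_add (φ : ℕ → ℝ) (p q k : ℕ) :
    convPow φ (p + q) k =
      ∑ ij ∈ Finset.HasAntidiagonal.antidiagonal k, convPow φ p ij.1 * convPow φ q ij.2 := by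
  simp only [convPow_eq_coeff, pow_add, PowerSeries.coeff_mul]

lemma convPow_succ (φ : ℕ → ℝ) (l k : ℕ) :
    convPow φ (l + 1) k =
      ∑ ij ∈ Finset.HasAntidiagonal.antidiagonal k, convPow φ l ij.1 * φ ij.2 := by
  simp only [convPow_eq_coeff, pow_succ, PowerSeries.coeff_mul, PowerSeries.coeff_mk]

lemma convPow_nonneg (hφ : ∀ i, 0 ≤ φ i) (l k : ℕ) : 0 ≤ convPow φ l k := by
  induction l generalizing k with
  | zero => simp only [convPow]; split_ifs <;> norm_num
  | succ l ih => exact Finset.sum_nonneg fun j _ => mul_nonneg (ih j) (hφ _)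

lemma convPow_eq_zero_of_lt (hφ0 : φ 0 = 0) {l k : ℕ} (hkl : k < l) : convPow φ l k = 0 := by
  have hX : PowerSeries.X ∣ PowerSeries.mk φ := by
    simp [PowerSeries.X_dvd_iff, hφ0]
  rw [convPow_eq_coeff]
  exact PowerSeries.X_pow_dvd_iff.1 (pow_dvd_pow_of_dvd hX l) k hkl

lemma summable_norm_and_hasSum_convPow_smul_pow {A : Type*} [NormedCommRing A] [NormedAlgebra ℝ A]
    [CompleteSpace A] {z : A} (hz : Summable fun k => ‖φ k • z ^ k‖) (l : ℕ) :
    (Summable fun k => ‖convPow φ l k • z ^ k‖) ∧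
      HasSum (fun k => convPow φ l k • z ^ k) ((∑' k, φ k • z ^ k) ^ l) := by
  induction l with
  | zero =>
    have hsupp : ∀ k ∉ ({0} : Finset ℕ), convPow φ 0 k • z ^ k = 0 := fun k hk => by
      simp [convPow, Finset.notMem_singleton.1 hk]
    refine ⟨summable_of_ne_finset_zero (s := {0}) fun k hk => by rw [hsupp k hk, norm_zero], ?_⟩
    simpa [convPow] using hasSum_sum_of_ne_finset_zero hsupp
  | succ l ih =>
    have hconv (k : ℕ) : convPow φ (l + 1) k • z ^ k =
        ∑ ij ∈ Finset.HasAntidiagonal.antidiagonal k,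
          (convPow φ l ij.1 • z ^ ij.1) * (φ ij.2 • z ^ ij.2) := by
      rw [convPow_succ, Finset.sum_smul]
      refine Finset.sum_congr rfl fun ij hij => ?_
      rw [smul_mul_smul_comm, ← pow_add, Finset.HasAntidiagonal.mem_antidiagonal.1 hij]
    have hsum := summable_norm_sum_mul_antidiagonal_of_summable_norm ih.1 hz
    simp only [← hconv] at hsum
    refine ⟨hsum, hsum.of_norm.hasSum_iff.2 ?_⟩
    rw [tsum_congr hconv, ← tsum_mul_tsum_eq_tsum_sum_antidiagonal_of_summable_norm ih.1 hz,
      ih.2.tsum_eq, pow_succ]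

lemma hasSum_convPow {s : ℝ} (hφ : HasSum φ s) (l : ℕ) : HasSum (convPow φ l) (s ^ l) := by
  have hz : Summable fun k => ‖φ k • (1 : ℝ) ^ k‖ := by
    simpa using hφ.summable.abs
  simpa [hφ.tsum_eq] using (summable_norm_and_hasSum_convPow_smul_pow hz l).2

end ConvPow

/-! ### Tails of convolution powers -/

/-- The mass that a summable sequence `f` puts on `[N, ∞)`. -/
noncomputable def tailMass (f : ℕ → ℝ) (N : ℕ) : ℝ := ∑' i, f (N + i)

section TailMass

variable {f φ : ℕ → ℝ}

lemma tailMass_eq_sub {s : ℝ} (hf : HasSum f s) (N : ℕ) :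
    tailMass f N = s - ∑ i ∈ Finset.range N, f i := by
  simp only [tailMass, add_comm N]
  rw [← hf.tsum_eq, ← hf.summable.sum_add_tsum_nat_add N, add_sub_cancel_left]

lemma tailMass_nonneg (hf : ∀ i, 0 ≤ f i) (N : ℕ) : 0 ≤ tailMass f N :=
  tsum_nonneg fun i => hf (N + i)

lemma sum_Ico_eq_tailMass_sub (hf : Summable f) {N M : ℕ} (hNM : N ≤ M) :
    ∑ i ∈ Finset.Ico N M, f i = tailMass f N - tailMass f M := by
  rw [tailMass_eq_sub hf.hasSum, tailMass_eq_sub hf.hasSum, Finset.sum_Ico_eq_sub _ hNM]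
  ring

lemma sum_Ico_le_tailMass (hf : ∀ i, 0 ≤ f i) (hs : Summable f) (N M : ℕ) :
    ∑ i ∈ Finset.Ico N M, f i ≤ tailMass f N := by
  rcases le_total N M with hNM | hMN
  · rw [sum_Ico_eq_tailMass_sub hs hNM]
    linarith [tailMass_nonneg hf M]
  · rw [Finset.Ico_eq_empty_of_le hMN, Finset.sum_empty]
    exact tailMass_nonneg hf N

lemma tailMass_le_of_sum_Ico_le (hf : ∀ i, 0 ≤ f i) {N : ℕ} {c : ℝ}
    (hc : ∀ M, ∑ i ∈ Finset.Ico N M, f i ≤ c) : tailMass f N ≤ c := by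
  refine Real.tsum_le_of_sum_range_le (fun i => hf _) fun n => ?_
  simpa [Finset.sum_Ico_eq_sum_range] using hc (N + n)

lemma sum_range_mul_min_le_sum_tailMass (hf : ∀ i, 0 ≤ f i) (hs : Summable f) (x n : ℕ) :
    ∑ i ∈ Finset.range n, f i * (min i x : ℕ) ≤ ∑ r ∈ Finset.range x, tailMass f (r + 1) := by
  have hmin : ∀ i, ((min i x : ℕ) : ℝ) = ∑ r ∈ Finset.range x, if r + 1 ≤ i then 1 else 0 := by
    intro i
    have hfilter : {r ∈ Finset.range x | r + 1 ≤ i} = Finset.range (min i x) := by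
      ext r
      simp only [Finset.mem_filter, Finset.mem_range]
      omega
    rw [Finset.sum_boole, hfilter, Finset.card_range]
  simp only [hmin, Finset.mul_sum]
  rw [Finset.sum_comm]
  refine Finset.sum_le_sum fun r _ => ?_
  have hfilter : {i ∈ Finset.range n | r + 1 ≤ i} = Finset.Ico (r + 1) n := by
    ext i
    simp only [Finset.mem_filter, Finset.mem_range, Finset.mem_Ico]
    omega
  simp only [mul_ite, mul_one, mul_zero]
  rw [← Finset.sum_filter, hfilter]
  exact sum_Ico_le_tailMass hf hs _ _

lemma sum_range_sum_antidiagonal_le {g : ℕ × ℕ → ℝ} (hg : ∀ p, 0 ≤ g p) (n : ℕ) :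
    ∑ k ∈ Finset.range n, ∑ p ∈ Finset.HasAntidiagonal.antidiagonal k, g p ≤
      ∑ i ∈ Finset.range n, ∑ j ∈ Finset.range n, g (i, j) := by
  have hfiber : ∀ k ∈ Finset.range n, Finset.HasAntidiagonal.antidiagonal k =
      {p ∈ Finset.range n ×ˢ Finset.range n | p.1 + p.2 = k} := by
    intro k hk
    ext p
    simp only [Finset.HasAntidiagonal.mem_antidiagonal, Finset.mem_filter, Finset.mem_product,
      Finset.mem_range] at hk ⊢
    omega
  rw [← Finset.sum_product', Finset.sum_congr rfl fun k hk => by rw [hfiber k hk]]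
  exact Finset.sum_fiberwise_le_sum_of_sum_fiber_nonneg fun _ _ => Finset.sum_nonneg fun p _ => hg p

lemma sum_range_convPow_mul_le_of_subadditive (hφ : ∀ i, 0 ≤ φ i) (hs : HasSum φ 1)
    (hf : ∀ i, 0 ≤ f i) (hf0 : f 0 = 0) (hsub : ∀ i j, f (i + j) ≤ f i + f j) {A : ℝ}
    (hA : ∀ n, ∑ i ∈ Finset.range n, φ i * f i ≤ A) (l n : ℕ) :
    ∑ k ∈ Finset.range n, convPow φ l k * f k ≤ l * A := by
  induction l with
  | zero => simp [convPow, hf0]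
  | succ l ih =>
    have hu := convPow_nonneg hφ l
    have hmass_l : ∑ i ∈ Finset.range n, convPow φ l i ≤ 1 := by
      simpa using sum_le_hasSum _ (fun i _ => hu i) (hasSum_convPow hs l)
    have hmass : ∑ j ∈ Finset.range n, φ j ≤ 1 := sum_le_hasSum _ (fun j _ => hφ j) hs
    have hmoment_l : 0 ≤ ∑ i ∈ Finset.range n, convPow φ l i * f i :=
      Finset.sum_nonneg fun i _ => mul_nonneg (hu i) (hf i)
    have hmoment : 0 ≤ ∑ j ∈ Finset.range n, φ j * f j :=
      Finset.sum_nonneg fun j _ => mul_nonneg (hφ j) (hf j)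
    calc ∑ k ∈ Finset.range n, convPow φ (l + 1) k * f k
        ≤ ∑ k ∈ Finset.range n, ∑ p ∈ Finset.HasAntidiagonal.antidiagonal k,
            (convPow φ l p.1 * f p.1 * φ p.2 + convPow φ l p.1 * (φ p.2 * f p.2)) := by
          refine Finset.sum_le_sum fun k _ => ?_
          rw [convPow_succ, Finset.sum_mul]
          refine Finset.sum_le_sum fun p hp => ?_
          rw [← Finset.HasAntidiagonal.mem_antidiagonal.1 hp]
          linarith [mul_le_mul_of_nonneg_left (hsub p.1 p.2) (mul_nonneg (hu p.1) (hφ p.2))]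
      _ ≤ ∑ i ∈ Finset.range n, ∑ j ∈ Finset.range n,
            (convPow φ l i * f i * φ j + convPow φ l i * (φ j * f j)) :=
          sum_range_sum_antidiagonal_le (fun p => add_nonneg
            (mul_nonneg (mul_nonneg (hu _) (hf _)) (hφ _))
            (mul_nonneg (hu _) (mul_nonneg (hφ _) (hf _)))) n
      _ = (∑ i ∈ Finset.range n, convPow φ l i * f i) * (∑ j ∈ Finset.range n, φ j) +
            (∑ i ∈ Finset.range n, convPow φ l i) * (∑ j ∈ Finset.range n, φ j * f j) := by
          simp only [Finset.sum_add_distrib, Finset.sum_mul_sum]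
      _ ≤ l * A + A := add_le_add ((mul_le_of_le_one_right hmoment_l hmass).trans ih)
          ((mul_le_of_le_one_left hmoment hmass_l).trans (hA n))
      _ = (l + 1 : ℕ) * A := by push_cast; ring

/-- Markov's inequality for the subadditive functional `i ↦ min i x`. -/
lemma mul_tailMass_convPow_le (hφ : ∀ i, 0 ≤ φ i) (hs : HasSum φ 1) (l x : ℕ) :
    x * tailMass (convPow φ l) x ≤ l * ∑ r ∈ Finset.range x, tailMass φ (r + 1) := by
  have hu := convPow_nonneg hφ l
  have hmin := sum_range_convPow_mul_le_of_subadditive (f := fun i => ((min i x : ℕ) : ℝ)) hφ hs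
    (fun i => Nat.cast_nonneg _) (by simp) (fun i j => by exact_mod_cast (by omega))
    (sum_range_mul_min_le_sum_tailMass hφ hs.summable x) l
  rcases Nat.eq_zero_or_pos x with rfl | hx
  · simp
  have hx0 : (0 : ℝ) < x := by exact_mod_cast hx
  rw [← le_div_iff₀' hx0]
  refine tailMass_le_of_sum_Ico_le hu fun M => ?_
  rw [le_div_iff₀' hx0]
  calc (x : ℝ) * ∑ i ∈ Finset.Ico x M, convPow φ l i
      = ∑ i ∈ Finset.Ico x M, convPow φ l i * (min i x : ℕ) := by
        rw [Finset.mul_sum]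
        refine Finset.sum_congr rfl fun i hi => ?_
        rw [min_eq_right (Finset.mem_Ico.1 hi).1, mul_comm]
    _ ≤ ∑ i ∈ Finset.range M, convPow φ l i * (min i x : ℕ) :=
        Finset.sum_le_sum_of_subset_of_nonneg
          (fun i hi => Finset.mem_range.2 (Finset.mem_Ico.1 hi).2)
          fun i _ _ => mul_nonneg (hu i) (Nat.cast_nonneg _)
    _ ≤ _ := hmin M

lemma sum_range_rpow_neg_le {α : ℝ} (hα0 : 0 ≤ α) (hα1 : α < 1) (x : ℕ) :
    ∑ r ∈ Finset.range x, ((r : ℝ) + 1) ^ (-α) ≤ (x : ℝ) ^ (1 - α) / (1 - α) := by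
  have hα : 0 < 1 - α := by linarith
  induction x with
  | zero => simp [Real.zero_rpow hα.ne']
  | succ x ih =>
    have hx : (0 : ℝ) < x + 1 := by positivity
    have hle : (1 : ℝ) / (x + 1) ≤ 1 := (div_le_one hx).2 (by linarith [x.cast_nonneg (α := ℝ)])
    have hbernoulli : (x : ℝ) ^ (1 - α) ≤
        ((x : ℝ) + 1) ^ (1 - α) - (1 - α) * ((x : ℝ) + 1) ^ (-α) :=
      calc (x : ℝ) ^ (1 - α) = ((x + 1) * (1 + -(1 / ((x : ℝ) + 1)))) ^ (1 - α) := by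
            congr 1
            field_simp
            ring
        _ = ((x : ℝ) + 1) ^ (1 - α) * (1 + -(1 / ((x : ℝ) + 1))) ^ (1 - α) :=
            Real.mul_rpow hx.le (by linarith)
        _ ≤ ((x : ℝ) + 1) ^ (1 - α) * (1 + (1 - α) * -(1 / ((x : ℝ) + 1))) := by
            gcongr
            exact rpow_one_add_le_one_add_mul_self (by linarith) hα.le (by linarith)
        _ = _ := by
            rw [sub_eq_neg_add, Real.rpow_add_one hx.ne']
            field_simp
            ring
    rw [le_div_iff₀ hα] at ih ⊢
    rw [Finset.sum_range_succ]
    push_cast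
    linarith

lemma tailMass_convPow_le_rpow (hφ : ∀ i, 0 ≤ φ i) (hs : HasSum φ 1) {α B : ℝ} (hα0 : 0 ≤ α)
    (hα1 : α < 1) (hB : ∀ N : ℕ, tailMass φ (N + 1) ≤ B * ((N : ℝ) + 1) ^ (-α)) (l : ℕ) {x : ℕ}
    (hx : 0 < x) : tailMass (convPow φ l) x ≤ B / (1 - α) * l * (x : ℝ) ^ (-α) := by
  have hx0 : (0 : ℝ) < x := by exact_mod_cast hx
  have hB0 : 0 ≤ B := by simpa using (tailMass_nonneg hφ _).trans (hB 0)
  refine le_of_mul_le_mul_left ?_ hx0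
  calc (x : ℝ) * tailMass (convPow φ l) x
      ≤ l * ∑ r ∈ Finset.range x, tailMass φ (r + 1) := mul_tailMass_convPow_le hφ hs l x
    _ ≤ l * ∑ r ∈ Finset.range x, B * ((r : ℝ) + 1) ^ (-α) := by
        gcongr with r
        exact hB r
    _ ≤ l * (B * ((x : ℝ) ^ (1 - α) / (1 - α))) := by
        rw [← Finset.mul_sum]
        gcongr
        exact sum_range_rpow_neg_le hα0 hα1 x
    _ = x * (B / (1 - α) * l * (x : ℝ) ^ (-α)) := by
        rw [sub_eq_neg_add, Real.rpow_add_one hx0.ne']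
        ring

end TailMass

/-! ### Fourier transforms of summable sequences -/

section Fourier

variable {f φ : ℕ → ℝ}

lemma ofReal_mul_exp_eq_smul_pow (r z : ℝ) (k : ℕ) :
    (r : ℂ) * Complex.exp (-(2 * Real.pi * Complex.I * k * z)) =
      r • Complex.exp (-(2 * Real.pi * Complex.I * z)) ^ k := by
  rw [Complex.real_smul, ← Complex.exp_nat_mul]
  ring_nf

lemma norm_ofReal_mul_exp (r z : ℝ) (k : ℕ) :
    ‖(r : ℂ) * Complex.exp (-(2 * Real.pi * Complex.I * k * z))‖ = |r| := by
  rw [norm_mul, Complex.norm_real, Real.norm_eq_abs, Complex.norm_exp]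
  simp

lemma fourierSeq_convPow (hφ : Summable φ) (l : ℕ) (z : ℝ) :
    fourierSeq (convPow φ l) z = fourierSeq φ z ^ l := by
  have hz : Summable fun k => ‖φ k • Complex.exp (-(2 * Real.pi * Complex.I * z)) ^ k‖ := by
    simpa only [← ofReal_mul_exp_eq_smul_pow, norm_ofReal_mul_exp] using hφ.abs
  simp only [fourierSeq, ofReal_mul_exp_eq_smul_pow]
  exact (summable_norm_and_hasSum_convPow_smul_pow hz l).2.tsum_eq

lemma hasSum_fourierSeq (hf : Summable f) (z : ℝ) :
    HasSum (fun k : ℕ => (f k : ℂ) * Complex.exp (-(2 * Real.pi * Complex.I * k * z)))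
      (fourierSeq f z) :=
  (hf.abs.of_norm_bounded fun k => (norm_ofReal_mul_exp (f k) z k).le).hasSum

lemma continuous_fourierSeq (hf : Summable f) : Continuous (fourierSeq f) :=
  continuous_tsum (fun k => by fun_prop) hf.abs fun k z => (norm_ofReal_mul_exp (f k) z k).le

lemma integral_exp_two_pi_mul_I_mul_int (m : ℤ) :
    ∫ z in (0 : ℝ)..1, Complex.exp (2 * Real.pi * Complex.I * m * z) = if m = 0 then 1 else 0 := by
  split_ifs with hm
  · simp [hm]
  · have hc : 2 * Real.pi * Complex.I * (m : ℂ) ≠ 0 :=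
      mul_ne_zero Complex.two_pi_I_ne_zero (Int.cast_ne_zero.2 hm)
    rw [integral_exp_mul_complex hc]
    simp [mul_comm _ (m : ℂ), Complex.exp_int_mul_two_pi_mul_I]

lemma integral_fourierSeq_mul_exp (hf : Summable f) (x : ℕ) :
    ∫ z in (0 : ℝ)..1, fourierSeq f z * Complex.exp (2 * Real.pi * Complex.I * x * z) = f x := by
  have hnorm (z : ℝ) : ‖Complex.exp (2 * Real.pi * Complex.I * x * z)‖ = 1 := by
    rw [Complex.norm_exp]
    simp
  have hterm (k : ℕ) : ∫ z in (0 : ℝ)..1, (f k : ℂ) *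
        Complex.exp (-(2 * Real.pi * Complex.I * k * z)) *
          Complex.exp (2 * Real.pi * Complex.I * x * z) = if k = x then (f x : ℂ) else 0 := by
    have hexp (z : ℝ) : (f k : ℂ) * Complex.exp (-(2 * Real.pi * Complex.I * k * z)) *
        Complex.exp (2 * Real.pi * Complex.I * x * z) =
          f k * Complex.exp (2 * Real.pi * Complex.I * ((x - k : ℤ) : ℂ) * z) := by
      rw [mul_assoc, ← Complex.exp_add]
      push_cast
      ring_nf
    simp only [hexp, intervalIntegral.integral_const_mul, integral_exp_two_pi_mul_I_mul_int,
      sub_eq_zero, Nat.cast_inj, eq_comm (a := x)]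
    split_ifs with hk <;> simp [hk]
  have hsum := intervalIntegral.hasSum_integral_of_dominated_convergence (μ := volume)
    (a := 0) (b := 1) (fun k _ => |f k|)
    (F := fun (k : ℕ) (z : ℝ) => (f k : ℂ) * Complex.exp (-(2 * Real.pi * Complex.I * k * z)) *
      Complex.exp (2 * Real.pi * Complex.I * x * z))
    (fun k => (by fun_prop : Continuous _).aestronglyMeasurable)
    (fun k => ae_of_all _ fun z _ => by rw [norm_mul, norm_ofReal_mul_exp, hnorm, mul_one])
    (ae_of_all _ fun _ _ => hf.abs) (by simp)
    (ae_of_all _ fun z _ => (hasSum_fourierSeq hf z).mul_right _)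
  simp only [hterm] at hsum
  exact hsum.unique (hasSum_ite_eq x (f x : ℂ))

lemma abs_le_integral_norm_fourierSeq (hf : Summable f) (x : ℕ) :
    |f x| ≤ ∫ z in (0 : ℝ)..1, ‖fourierSeq f z‖ :=
  calc |f x| = ‖∫ z in (0 : ℝ)..1,
          fourierSeq f z * Complex.exp (2 * Real.pi * Complex.I * x * z)‖ := by
        rw [integral_fourierSeq_mul_exp hf, Complex.norm_real, Real.norm_eq_abs]
    _ ≤ ∫ z in (0 : ℝ)..1, ‖fourierSeq f z * Complex.exp (2 * Real.pi * Complex.I * x * z)‖ :=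
        intervalIntegral.norm_integral_le_integral_norm zero_le_one
    _ = ∫ z in (0 : ℝ)..1, ‖fourierSeq f z‖ := by
        simp only [norm_mul, Complex.norm_exp]
        simp

lemma ofReal_mul_exp_re (r z : ℝ) (k : ℕ) :
    ((r : ℂ) * Complex.exp (-(2 * Real.pi * Complex.I * k * z))).re =
      r * Real.cos (2 * Real.pi * k * z) := by
  rw [Complex.re_ofReal_mul, Complex.exp_re]
  simp

lemma ofReal_mul_exp_im (r z : ℝ) (k : ℕ) :
    ((r : ℂ) * Complex.exp (-(2 * Real.pi * Complex.I * k * z))).im =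
      -(r * Real.sin (2 * Real.pi * k * z)) := by
  rw [Complex.im_ofReal_mul, Complex.exp_im]
  simp

lemma hasSum_mul_mul_cos_sub (hf : Summable f) (z : ℝ) :
    HasSum (fun p : ℕ × ℕ => f p.1 * f p.2 * Real.cos (2 * Real.pi * ((p.1 : ℝ) - p.2) * z))
      (‖fourierSeq f z‖ ^ 2) := by
  have hmul {u : ℕ → ℝ} {s : ℝ} (hu : HasSum u s) (hle : ∀ k, ‖u k‖ ≤ |f k|) :
      HasSum (fun p : ℕ × ℕ => u p.1 * u p.2) (s * s) :=
    have hnorm : Summable fun k => ‖u k‖ :=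
      hf.abs.of_nonneg_of_le (fun _ => norm_nonneg _) hle
    hu.mul hu (summable_mul_of_summable_norm hnorm hnorm)
  have hF := hasSum_fourierSeq hf z
  have hre := hmul (Complex.hasSum_re hF) fun k =>
    (Complex.abs_re_le_norm _).trans (norm_ofReal_mul_exp (f k) z k).le
  have him := hmul (Complex.hasSum_im hF) fun k =>
    (Complex.abs_im_le_norm _).trans (norm_ofReal_mul_exp (f k) z k).le
  rw [Complex.sq_norm, Complex.normSq_apply]
  convert hre.add him using 2 with p
  rw [ofReal_mul_exp_re, ofReal_mul_exp_re, ofReal_mul_exp_im, ofReal_mul_exp_im, mul_sub, sub_mul,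
    Real.cos_sub]
  ring

/-- The symmetrised defect `1 - |φ̂|²`. It is quasi-subadditive in the frequency, which the modulus
`|φ̂|` itself does not display. -/
noncomputable def fourierDefect (φ : ℕ → ℝ) (z : ℝ) : ℝ := 1 - ‖fourierSeq φ z‖ ^ 2

lemma hasSum_fourierDefect (hφ : HasSum φ 1) (z : ℝ) :
    HasSum (fun p : ℕ × ℕ =>
      φ p.1 * φ p.2 * (1 - Real.cos (2 * Real.pi * ((p.1 : ℝ) - p.2) * z)))
      (fourierDefect φ z) := by
  have hmass := hφ.mul hφ (summable_mul_of_summable_norm hφ.summable.norm hφ.summable.norm)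
  simpa only [mul_one, mul_sub, fourierDefect] using
    hmass.sub (hasSum_mul_mul_cos_sub hφ.summable z)

lemma continuous_fourierDefect (hφ : Summable φ) : Continuous (fourierDefect φ) :=
  continuous_const.sub ((continuous_fourierSeq hφ).norm.pow 2)

lemma fourierDefect_le_one (φ : ℕ → ℝ) (z : ℝ) : fourierDefect φ z ≤ 1 :=
  sub_le_self _ (sq_nonneg _)

lemma norm_fourierSeq_le_exp (φ : ℕ → ℝ) (z : ℝ) :
    ‖fourierSeq φ z‖ ≤ Real.exp (-(fourierDefect φ z / 2)) := by
  refine le_of_sq_le_sq ?_ (Real.exp_pos _).le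
  calc ‖fourierSeq φ z‖ ^ 2 = 1 - fourierDefect φ z := (sub_sub_cancel 1 _).symm
    _ ≤ Real.exp (-fourierDefect φ z) := Real.one_sub_le_exp_neg _
    _ = Real.exp (-(fourierDefect φ z / 2)) ^ 2 := by
        rw [← Real.exp_nat_mul]
        congr 1
        push_cast
        ring

lemma one_sub_cos_sub_le (x y : ℝ) :
    1 - Real.cos (x - y) ≤ 2 * (1 - Real.cos x) + 2 * (1 - Real.cos y) := by
  -- The difference of the two sides is `‖exp (i x) + exp (i y) - 2‖² / 2`.
  rw [Real.cos_sub]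
  nlinarith [sq_nonneg (Real.cos x + Real.cos y - 2), sq_nonneg (Real.sin x + Real.sin y),
    Real.sin_sq_add_cos_sq x, Real.sin_sq_add_cos_sq y]

lemma fourierDefect_sub_le (hφnn : ∀ i, 0 ≤ φ i) (hφ : HasSum φ 1) (s t : ℝ) :
    fourierDefect φ (t - s) ≤ 2 * fourierDefect φ t + 2 * fourierDefect φ s := by
  refine hasSum_le (fun p => ?_) (hasSum_fourierDefect hφ (t - s))
    (((hasSum_fourierDefect hφ t).mul_left 2).add ((hasSum_fourierDefect hφ s).mul_left 2))
  have hcos := mul_le_mul_of_nonneg_left (one_sub_cos_sub_le (2 * Real.pi * ((p.1 : ℝ) - p.2) * t)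
    (2 * Real.pi * ((p.1 : ℝ) - p.2) * s)) (mul_nonneg (hφnn p.1) (hφnn p.2))
  rw [← mul_sub] at hcos
  linarith

lemma mul_sum_le_fourierDefect (hφnn : ∀ i, 0 ≤ φ i) (hφ : HasSum φ 1) (s : Finset ℕ) (i : ℕ)
    (z : ℝ) :
    φ i * ∑ j ∈ s, φ j * (1 - Real.cos (2 * Real.pi * ((j : ℝ) - i) * z)) ≤
      fourierDefect φ z := by
  have hterm (p : ℕ × ℕ) :
      0 ≤ φ p.1 * φ p.2 * (1 - Real.cos (2 * Real.pi * ((p.1 : ℝ) - p.2) * z)) :=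
    mul_nonneg (mul_nonneg (hφnn _) (hφnn _)) (sub_nonneg.2 (Real.cos_le_one _))
  refine le_of_eq_of_le ?_
    (sum_le_hasSum (s ×ˢ {i}) (fun p _ => hterm p) (hasSum_fourierDefect hφ z))
  simp only [Finset.sum_product, Finset.sum_singleton, Finset.mul_sum]
  exact Finset.sum_congr rfl fun j _ => by ring

lemma mul_sum_Ico_le_fourierDefect (hφnn : ∀ i, 0 ≤ φ i) (hφ : HasSum φ 1) {i N M : ℕ}
    (hi : 2 * i ≤ N) {t : ℝ} (hM : M * |t| ≤ 1 / 2) :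
    2 * (N * |t|) ^ 2 * (φ i * ∑ j ∈ Finset.Ico N M, φ j) ≤ fourierDefect φ t := by
  have hcos (j : ℕ) (hj : j ∈ Finset.Ico N M) :
      2 * (N * |t|) ^ 2 ≤ 1 - Real.cos (2 * Real.pi * ((j : ℝ) - i) * t) := by
    obtain ⟨hNj, hjM⟩ := Finset.mem_Ico.1 hj
    have hij : (N : ℝ) ≤ 2 * ((j : ℝ) - i) := by
      rw [← Nat.cast_sub (by omega)]
      exact_mod_cast (by omega)
    have hjM' : (j : ℝ) - i ≤ M := by
      rw [← Nat.cast_sub (by omega)]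
      exact_mod_cast (by omega)
    have habs : |((j : ℝ) - i) * t| = ((j : ℝ) - i) * |t| := by
      rw [abs_mul, abs_of_nonneg (by linarith [N.cast_nonneg (α := ℝ)])]
    have hhalf : |((j : ℝ) - i) * t| ≤ 1 / 2 :=
      habs.trans_le ((mul_le_mul_of_nonneg_right hjM' (abs_nonneg t)).trans hM)
    have hpi : |2 * Real.pi * ((j : ℝ) - i) * t| ≤ Real.pi := by
      rw [mul_assoc (2 * Real.pi), abs_mul, abs_of_pos Real.two_pi_pos]
      nlinarith [Real.pi_pos]
    calc 2 * (N * |t|) ^ 2 ≤ 2 * (2 * |((j : ℝ) - i) * t|) ^ 2 := by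
          rw [habs, ← mul_assoc]
          gcongr
      _ = 2 / Real.pi ^ 2 * (2 * Real.pi * ((j : ℝ) - i) * t) ^ 2 := by
          rw [mul_pow, sq_abs]
          field_simp
      _ ≤ _ := by linarith [Real.cos_le_one_sub_mul_cos_sq hpi]
  refine le_trans ?_ (mul_sum_le_fourierDefect hφnn hφ (Finset.Ico N M) i t)
  rw [mul_left_comm, Finset.mul_sum]
  refine mul_le_mul_of_nonneg_left (Finset.sum_le_sum fun j hj => ?_) (hφnn i)
  rw [mul_comm]
  exact mul_le_mul_of_nonneg_left (hcos j hj) (hφnn j)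

lemma exists_nat_mul_le_half {R M t : ℝ} (hR : 0 < R) (hM : 1 ≤ M) (ht0 : 0 < t)
    (ht : t ≤ 1 / (2 * R * M)) :
    ∃ N : ℕ, M < N + 1 ∧ R * (N * t) ≤ 1 / 2 ∧ 1 / (4 * R) ≤ N * t := by
  have hMX : M ≤ 1 / (2 * R * t) := by
    rw [le_div_iff₀ (by positivity)] at ht ⊢
    linarith
  have hle : (⌊1 / (2 * R * t)⌋₊ : ℝ) ≤ 1 / (2 * R * t) := Nat.floor_le (by positivity)
  have hlt := Nat.lt_floor_add_one (1 / (2 * R * t))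
  have hone : (1 : ℝ) ≤ ⌊1 / (2 * R * t)⌋₊ := by
    exact_mod_cast Nat.le_floor (by exact_mod_cast hM.trans hMX)
  refine ⟨_, hMX.trans_lt hlt, ?_, ?_⟩
  · rw [le_div_iff₀ (by positivity)] at hle
    linarith
  · have hle2 : 1 / (2 * R * t) ≤ 2 * ⌊1 / (2 * R * t)⌋₊ := by linarith
    rw [div_le_iff₀ (by positivity)] at hle2 ⊢
    linarith

lemma exists_mul_rpow_le_fourierDefect (hφnn : ∀ i, 0 ≤ φ i) (hφ : HasSum φ 1) {α κ : ℝ}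
    (hα : 0 < α) (hκ : 0 < κ) {R N₀ : ℕ} (hR : 0 < R)
    (hblock : ∀ N ≥ N₀, κ * (N : ℝ) ^ (-α) ≤ ∑ j ∈ Finset.Ico N (R * N), φ j) :
    ∃ c > 0, ∃ t₀ > 0, ∀ t : ℝ, |t| ≤ t₀ → c * |t| ^ α ≤ fourierDefect φ t := by
  obtain ⟨i, hi⟩ : ∃ i, φ i ≠ 0 := by
    by_contra! hzero
    exact one_ne_zero (hφ.tsum_eq.symm.trans (by simp only [hzero, tsum_zero]))
  have hi0 : 0 < φ i := (hφnn i).lt_of_ne' hi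
  have hR0 : (0 : ℝ) < R := by exact_mod_cast hR
  let M : ℕ := N₀ + 2 * i + 1
  refine ⟨2 * (1 / (4 * R)) ^ 2 * (φ i * (κ * (2 * R) ^ α)), by positivity, 1 / (2 * R * M),
    by positivity, fun t ht => ?_⟩
  rcases eq_or_ne t 0 with rfl | ht0
  · simpa [Real.zero_rpow hα.ne'] using
      mul_sum_Ico_le_fourierDefect hφnn hφ (i := i) (N := 2 * i) (M := 0) le_rfl (t := 0) (by simp)
  obtain ⟨N, hMN, hhalf, hquarter⟩ :=
    exists_nat_mul_le_half hR0 (M := M) (by exact_mod_cast (by omega)) (abs_pos.2 ht0) ht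
  have hMN : M < N + 1 := by exact_mod_cast hMN
  have hN0 : (0 : ℝ) < N := by exact_mod_cast (by omega)
  have hpow : κ * (2 * R) ^ α * |t| ^ α ≤ ∑ j ∈ Finset.Ico N (R * N), φ j :=
    calc κ * (2 * R) ^ α * |t| ^ α = κ * (2 * R * |t|) ^ α := by
          rw [Real.mul_rpow (by positivity) (abs_nonneg t), mul_assoc]
      _ ≤ κ * (N : ℝ)⁻¹ ^ α := by
          gcongr κ * ?_ ^ α
          rw [le_inv_comm₀ (by positivity) hN0, ← one_div, le_div_iff₀ (by positivity)]
          linarith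
      _ ≤ _ := by
          rw [Real.inv_rpow hN0.le, ← Real.rpow_neg hN0.le]
          exact hblock N (by omega)
  calc 2 * (1 / (4 * R)) ^ 2 * (φ i * (κ * (2 * R) ^ α)) * |t| ^ α
      = 2 * (1 / (4 * R)) ^ 2 * (φ i * (κ * (2 * R) ^ α * |t| ^ α)) := by ring
    _ ≤ 2 * (N * |t|) ^ 2 * (φ i * ∑ j ∈ Finset.Ico N (R * N), φ j) := by gcongr
    _ ≤ _ := mul_sum_Ico_le_fourierDefect hφnn hφ (by omega) (by push_cast; linarith)

lemma integral_exp_neg_mul_abs_rpow {p b : ℝ} (hp : 0 < p) (hb : 0 < b) :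
    ∫ x : ℝ, Real.exp (-(b * |x| ^ p)) = 2 * (b ^ (-1 / p) * Real.Gamma (1 / p + 1)) := by
  rw [integral_comp_abs (f := fun x => Real.exp (-(b * x ^ p))), ← integral_exp_neg_mul_rpow hp hb]
  simp only [neg_mul]

lemma integral_exp_neg_mul_le_of_sub_le {E : ℝ → ℝ} (hE : Continuous E)
    (hsub : ∀ s t, E (t - s) ≤ 2 * E t + 2 * E s) {α c t₀ : ℝ} (hα : 0 < α) (hc : 0 < c)
    (hlow : ∀ t, |t| ≤ t₀ → c * |t| ^ α ≤ E t) {u v b : ℝ} (huv : u ≤ v) (hv : v ≤ u + t₀)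
    (hb : 0 < b) :
    ∫ z in u..v, Real.exp (-(b * E z)) ≤
      2 * ((b * c / 4) ^ (-1 / α) * Real.Gamma (1 / α + 1)) := by
  -- Centring at a minimiser `s` of `E` turns quasi-subadditivity into `E (z - s) ≤ 4 E z`.
  obtain ⟨s, hs, hmin⟩ := isCompact_Icc.exists_isMinOn (nonempty_Icc.2 huv) hE.continuousOn
  have hbc : 0 < b * c / 4 := by positivity
  have hint := integral_exp_neg_mul_abs_rpow hα hbc
  have hintegrable : Integrable fun z : ℝ => Real.exp (-(b * c / 4 * |z| ^ α)) := by
    refine .of_integral_ne_zero (hint.trans_ne (ne_of_gt ?_))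
    have := Real.Gamma_pos_of_pos (by positivity : 0 < 1 / α + 1)
    positivity
  have hshift := hintegrable.comp_sub_right s
  have hpoint : ∀ z ∈ Icc u v, Real.exp (-(b * E z)) ≤ Real.exp (-(b * c / 4 * |z - s| ^ α)) := by
    intro z hz
    have hzs : |z - s| ≤ t₀ := abs_sub_le_iff.2 ⟨by linarith [hz.2, hs.1], by linarith [hz.1, hs.2]⟩
    have hEz : c * |z - s| ^ α ≤ 4 * E z := by
      linarith [hlow _ hzs, hsub s z, isMinOn_iff.1 hmin z hz]
    exact Real.exp_le_exp.2 (by nlinarith)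
  calc ∫ z in u..v, Real.exp (-(b * E z))
      ≤ ∫ z in u..v, Real.exp (-(b * c / 4 * |z - s| ^ α)) :=
        intervalIntegral.integral_mono_on huv
          (Continuous.intervalIntegrable (by fun_prop) _ _) hshift.intervalIntegrable hpoint
    _ ≤ ∫ z : ℝ, Real.exp (-(b * c / 4 * |z - s| ^ α)) := by
        rw [intervalIntegral.integral_of_le huv]
        exact setIntegral_le_integral hshift (ae_of_all _ fun _ => (Real.exp_pos _).le)
    _ = _ := by rw [integral_sub_right_eq_self fun z => Real.exp (-(b * c / 4 * |z| ^ α)), hint]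

lemma exists_integral_exp_neg_mul_le {E : ℝ → ℝ} (hE : Continuous E)
    (hsub : ∀ s t, E (t - s) ≤ 2 * E t + 2 * E s) {α c t₀ : ℝ} (hα : 0 < α) (hc : 0 < c)
    (ht₀ : 0 < t₀) (hlow : ∀ t, |t| ≤ t₀ → c * |t| ^ α ≤ E t) :
    ∃ C, ∀ b > 0, ∫ z in (0 : ℝ)..1, Real.exp (-(b * E z)) ≤ C * b ^ (-(1 / α)) := by
  obtain ⟨m, hm⟩ := exists_nat_one_div_lt ht₀
  refine ⟨(m + 1) * (2 * ((c / 4) ^ (-1 / α) * Real.Gamma (1 / α + 1))), fun b hb => ?_⟩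
  have hm0 : (0 : ℝ) < m + 1 := by positivity
  have hadj := intervalIntegral.sum_integral_adjacent_intervals (μ := volume)
    (f := fun z => Real.exp (-(b * E z))) (a := fun k : ℕ => (k : ℝ) / (m + 1)) (n := m + 1)
    fun k _ => Continuous.intervalIntegrable (by fun_prop) _ _
  simp only [Nat.cast_zero, zero_div, Nat.cast_add, Nat.cast_one, div_self hm0.ne'] at hadj
  rw [← hadj]
  calc ∑ k ∈ Finset.range (m + 1),
        ∫ z in (k : ℝ) / (m + 1)..(k + 1) / (m + 1), Real.exp (-(b * E z))
      ≤ ∑ k ∈ Finset.range (m + 1), 2 * ((b * c / 4) ^ (-1 / α) * Real.Gamma (1 / α + 1)) := by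
        refine Finset.sum_le_sum fun k _ => ?_
        have hstep : ((k : ℝ) + 1) / (m + 1) = k / (m + 1) + 1 / (m + 1) := add_div _ _ _
        refine integral_exp_neg_mul_le_of_sub_le hE hsub hα hc hlow ?_ ?_ hb
        · exact hstep ▸ le_add_of_nonneg_right (by positivity)
        · linarith
    _ = _ := by
        rw [Finset.sum_const, Finset.card_range, nsmul_eq_mul, mul_div_assoc,
          Real.mul_rpow hb.le (by positivity), neg_div]
        push_cast
        ring

lemma convPow_le_integral_exp_fourierDefect (hφ : HasSum φ 1) (l x : ℕ) :
    convPow φ l x ≤ Real.exp (1 / 2) *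
      ∫ z in (0 : ℝ)..1, Real.exp (-(((l : ℝ) + 1) / 2 * fourierDefect φ z)) := by
  have hcont := continuous_fourierDefect hφ.summable
  have hsum := (hasSum_convPow hφ l).summable
  have hpoint (z : ℝ) : ‖fourierSeq (convPow φ l) z‖ ≤
      Real.exp (1 / 2) * Real.exp (-(((l : ℝ) + 1) / 2 * fourierDefect φ z)) :=
    calc ‖fourierSeq (convPow φ l) z‖ = ‖fourierSeq φ z‖ ^ l := by
          rw [fourierSeq_convPow hφ.summable, norm_pow]
      _ ≤ Real.exp (-(fourierDefect φ z / 2)) ^ l := by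
          gcongr
          exact norm_fourierSeq_le_exp φ z
      _ ≤ _ := by
          rw [← Real.exp_nat_mul, ← Real.exp_add, Real.exp_le_exp]
          linarith [fourierDefect_le_one φ z]
  calc convPow φ l x ≤ |convPow φ l x| := le_abs_self _
    _ ≤ ∫ z in (0 : ℝ)..1, ‖fourierSeq (convPow φ l) z‖ := abs_le_integral_norm_fourierSeq hsum x
    _ ≤ ∫ z in (0 : ℝ)..1,
          Real.exp (1 / 2) * Real.exp (-(((l : ℝ) + 1) / 2 * fourierDefect φ z)) :=
        intervalIntegral.integral_mono_on zero_le_one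
          ((continuous_fourierSeq hsum).norm.intervalIntegrable _ _)
          (Continuous.intervalIntegrable (by fun_prop) _ _) fun z _ => hpoint z
    _ = _ := intervalIntegral.integral_const_mul _ _

lemma exists_convPow_le_rpow (hφnn : ∀ i, 0 ≤ φ i) (hφ : HasSum φ 1) {α κ : ℝ}
    (hα : 0 < α) (hκ : 0 < κ) {R N₀ : ℕ} (hR : 0 < R)
    (hblock : ∀ N ≥ N₀, κ * (N : ℝ) ^ (-α) ≤ ∑ j ∈ Finset.Ico N (R * N), φ j) :
    ∃ C, ∀ l x : ℕ, convPow φ l x ≤ C * ((l : ℝ) + 1) ^ (-(1 / α)) := by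
  obtain ⟨c, hc, t₀, ht₀, hlow⟩ := exists_mul_rpow_le_fourierDefect hφnn hφ hα hκ hR hblock
  obtain ⟨C, hC⟩ := exists_integral_exp_neg_mul_le (continuous_fourierDefect hφ.summable)
    (fourierDefect_sub_le hφnn hφ) hα hc ht₀ hlow
  refine ⟨Real.exp (1 / 2) * (C * 2⁻¹ ^ (-(1 / α))), fun l x => ?_⟩
  calc convPow φ l x ≤ Real.exp (1 / 2) * (C * (((l : ℝ) + 1) / 2) ^ (-(1 / α))) :=
        (convPow_le_integral_exp_fourierDefect hφ l x).trans
          (mul_le_mul_of_nonneg_left (hC _ (by positivity)) (Real.exp_pos _).le)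
    _ = _ := by
        rw [div_eq_mul_inv ((l : ℝ) + 1), Real.mul_rpow (by positivity) (by positivity)]
        ring

end Fourier

/-! ### Cross-correlations of convolution powers -/

section Correlation

variable {f g φ : ℕ → ℝ}

lemma sum_antidiagonal_mul_le_tailMass_add (hf : ∀ i, 0 ≤ f i) (hg : ∀ i, 0 ≤ g i)
    (hfs : Summable f) (hgs : Summable g) {D : ℝ} (hfD : ∀ i, f i ≤ D) (hgD : ∀ i, g i ≤ D)
    {x y : ℕ} (hy : 2 * y ≤ x + 1) :
    ∑ p ∈ Finset.HasAntidiagonal.antidiagonal x, f p.1 * g p.2 ≤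
      D * (tailMass f y + tailMass g y) := by
  have hD : 0 ≤ D := (hf 0).trans (hfD 0)
  have htail {h : ℕ → ℝ} (hh : ∀ i, 0 ≤ h i) (hs : Summable h) :
      ∑ i ∈ Finset.range (x + 1), (if y ≤ i then h i else 0) ≤ tailMass h y := by
    refine le_trans (le_of_eq ?_) (sum_Ico_le_tailMass hh hs y (x + 1))
    rw [← Finset.sum_filter]
    congr 1
    ext i
    simp only [Finset.mem_filter, Finset.mem_range, Finset.mem_Ico]
    tauto
  have hterm : ∀ p ∈ Finset.HasAntidiagonal.antidiagonal x, f p.1 * g p.2 ≤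
      D * ((if y ≤ p.1 then f p.1 else 0) + if y ≤ p.2 then g p.2 else 0) := by
    intro p hp
    have hsum := Finset.HasAntidiagonal.mem_antidiagonal.1 hp
    have hf_mul : f p.1 * g p.2 ≤ D * f p.1 := by
      rw [mul_comm]
      exact mul_le_mul_of_nonneg_right (hgD _) (hf _)
    have hg_mul : f p.1 * g p.2 ≤ D * g p.2 := mul_le_mul_of_nonneg_right (hfD _) (hg _)
    have := mul_nonneg hD (hf p.1)
    have := mul_nonneg hD (hg p.2)
    split_ifs with h₁ h₂ h₂
    · linarith
    · linarith
    · linarith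
    · omega
  refine (Finset.sum_le_sum hterm).trans ?_
  rw [← Finset.mul_sum, Finset.sum_add_distrib,
    ← Finset.Nat.sum_antidiagonal_swap (f := fun p => if y ≤ p.2 then g p.2 else 0)]
  simp only [Finset.Nat.sum_antidiagonal_eq_sum_range_succ_mk, Prod.swap]
  gcongr
  exacts [htail hf hfs, htail hg hgs]

lemma rpow_neg_le_of_le_two_mul {s x y : ℝ} (hs : 0 ≤ s) (hx : 0 < x) (hxy : x ≤ 2 * y) :
    y ^ (-s) ≤ 2 ^ s * x ^ (-s) :=
  calc y ^ (-s) ≤ (x / 2) ^ (-s) :=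
        Real.rpow_le_rpow_of_nonpos (by positivity) (by linarith) (by linarith)
    _ = 2 ^ s * x ^ (-s) := by
        rw [Real.div_rpow hx.le zero_le_two, Real.rpow_neg zero_le_two, div_inv_eq_mul, mul_comm]

lemma convPow_le_rpow_mul_rpow (hφnn : ∀ i, 0 ≤ φ i) (hφ : Summable φ) {α β B C : ℝ}
    (hα : 0 ≤ α) (hβ : 0 ≤ β)
    (hB : ∀ l x : ℕ, 0 < x → tailMass (convPow φ l) x ≤ B * l * (x : ℝ) ^ (-α))
    (hC : ∀ l x : ℕ, convPow φ l x ≤ C * ((l : ℝ) + 1) ^ (-β)) (l : ℕ) {x : ℕ} (hx : 0 < x) :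
    convPow φ l x ≤ 2 ^ (α + β) * B * C * ((l : ℝ) + 1) ^ (1 - β) * (x : ℝ) ^ (-α) := by
  have hB0 : 0 ≤ B := by
    simpa using (tailMass_nonneg (convPow_nonneg hφnn 1) 1).trans (hB 1 1 one_pos)
  have hC0 : 0 ≤ C := by simpa using (convPow_nonneg hφnn 0 0).trans (hC 0 0)
  have hsup {p : ℕ} (hp : l + 1 ≤ 2 * (p + 1)) (k : ℕ) :
      convPow φ p k ≤ C * (2 ^ β * ((l : ℝ) + 1) ^ (-β)) := by
    refine (hC p k).trans (mul_le_mul_of_nonneg_left ?_ hC0)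
    exact rpow_neg_le_of_le_two_mul hβ (by positivity) (by exact_mod_cast hp)
  have hsummable (p : ℕ) : Summable (convPow φ p) := (hasSum_convPow hφ.hasSum p).summable
  set y := (x + 1) / 2
  obtain ⟨p, q, rfl, hp, hq⟩ : ∃ p q, l = p + q ∧ l + 1 ≤ 2 * (p + 1) ∧ l + 1 ≤ 2 * (q + 1) :=
    ⟨l / 2, l - l / 2, by omega, by omega, by omega⟩
  calc convPow φ (p + q) x
      ≤ C * (2 ^ β * (((p + q : ℕ) : ℝ) + 1) ^ (-β)) *
          (tailMass (convPow φ p) y + tailMass (convPow φ q) y) := by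
        rw [convPow_add]
        exact sum_antidiagonal_mul_le_tailMass_add (convPow_nonneg hφnn p) (convPow_nonneg hφnn q)
          (hsummable p) (hsummable q) (hsup hp) (hsup hq) (by omega)
    _ ≤ C * (2 ^ β * (((p + q : ℕ) : ℝ) + 1) ^ (-β)) *
          (B * p * (y : ℝ) ^ (-α) + B * q * (y : ℝ) ^ (-α)) := by
        gcongr <;> exact hB _ y (by omega)
    _ = C * (2 ^ β * (((p + q : ℕ) : ℝ) + 1) ^ (-β)) * (B * (p + q : ℕ) * (y : ℝ) ^ (-α)) := by
        push_cast
        ring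
    _ ≤ C * (2 ^ β * (((p + q : ℕ) : ℝ) + 1) ^ (-β)) *
          (B * ((p + q : ℕ) + 1) * (2 ^ α * (x : ℝ) ^ (-α))) := by
        gcongr
        · linarith
        · exact rpow_neg_le_of_le_two_mul hα (by exact_mod_cast hx) (by exact_mod_cast (by omega))
    _ = _ := by
        rw [Real.rpow_add two_pos, sub_eq_neg_add 1 β, Real.rpow_add_one (by positivity)]
        ring

lemma sum_range_mul_add_le_of_right_le (hf : ∀ i, 0 ≤ f i) (hfs : HasSum f 1) {D : ℝ} (hD : 0 ≤ D)
    {m : ℕ} (hgD : ∀ i, g (i + m) ≤ D) (n : ℕ) :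
    ∑ i ∈ Finset.range n, f i * g (i + m) ≤ D :=
  calc ∑ i ∈ Finset.range n, f i * g (i + m) ≤ ∑ i ∈ Finset.range n, f i * D :=
        Finset.sum_le_sum fun i _ => mul_le_mul_of_nonneg_left (hgD i) (hf i)
    _ ≤ D := by
        rw [← Finset.sum_mul]
        exact mul_le_of_le_one_left hD (sum_le_hasSum _ (fun i _ => hf i) hfs)

lemma sum_range_mul_add_le_of_left_le (hg : ∀ i, 0 ≤ g i) (hgs : Summable g) {D : ℝ} (hD : 0 ≤ D)
    (hfD : ∀ i, f i ≤ D) (m n : ℕ) :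
    ∑ i ∈ Finset.range n, f i * g (i + m) ≤ D * tailMass g m :=
  calc ∑ i ∈ Finset.range n, f i * g (i + m) ≤ D * ∑ i ∈ Finset.range n, g (m + i) := by
        rw [Finset.mul_sum]
        refine Finset.sum_le_sum fun i _ => ?_
        rw [add_comm i m]
        exact mul_le_mul_of_nonneg_right (hfD i) (hg _)
    _ ≤ D * tailMass g m := by
        rw [Finset.range_eq_Ico, Finset.sum_Ico_add (f := g), zero_add, add_comm n m]
        exact mul_le_mul_of_nonneg_left (sum_Ico_le_tailMass hg hgs _ _) hD

lemma sum_range_convPow_mul_le (hφnn : ∀ i, 0 ≤ φ i) (hφ : HasSum φ 1) {β C : ℝ}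
    (hC : ∀ l x : ℕ, convPow φ l x ≤ C * ((l : ℝ) + 1) ^ (-β)) (l l' m n : ℕ) :
    ∑ i ∈ Finset.range n, convPow φ l i * convPow φ l' (i + m) ≤
      C * ((max l l' : ℕ) + 1 : ℝ) ^ (-β) := by
  have hmass (k : ℕ) : HasSum (convPow φ k) 1 := by simpa using hasSum_convPow hφ k
  have hD (k : ℕ) : 0 ≤ C * ((k : ℝ) + 1) ^ (-β) := (convPow_nonneg hφnn k 0).trans (hC k 0)
  rcases le_total l l' with h | h
  · rw [max_eq_right h]
    exact sum_range_mul_add_le_of_right_le (convPow_nonneg hφnn l) (hmass l) (hD l')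
      (fun i => hC l' (i + m)) n
  · rw [max_eq_left h]
    refine (sum_range_mul_add_le_of_left_le (convPow_nonneg hφnn l') (hmass l').summable (hD l)
      (hC l) m n).trans (mul_le_of_le_one_right (hD l) ?_)
    rw [tailMass_eq_sub (hmass l')]
    exact sub_le_self _ (Finset.sum_nonneg fun i _ => convPow_nonneg hφnn l' i)

lemma sum_range_convPow_mul_le_of_pos (hφnn : ∀ i, 0 ≤ φ i) (hφ : HasSum φ 1) {α β B C : ℝ}
    (hα : 0 ≤ α) (hβ : 0 ≤ β)
    (hB : ∀ l x : ℕ, 0 < x → tailMass (convPow φ l) x ≤ B * l * (x : ℝ) ^ (-α))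
    (hC : ∀ l x : ℕ, convPow φ l x ≤ C * ((l : ℝ) + 1) ^ (-β)) (l l' : ℕ) {m : ℕ} (hm : 0 < m)
    (n : ℕ) :
    ∑ i ∈ Finset.range n, convPow φ l i * convPow φ l' (i + m) ≤
      2 ^ (α + β) * B * C * ((max l l' : ℕ) + 1 : ℝ) ^ (1 - β) * (m : ℝ) ^ (-α) := by
  have hm0 : (0 : ℝ) < m := by exact_mod_cast hm
  have hB0 : 0 ≤ B := by
    simpa using (tailMass_nonneg (convPow_nonneg hφnn 1) 1).trans (hB 1 1 one_pos)
  have hC0 : 0 ≤ C := by simpa using (convPow_nonneg hφnn 0 0).trans (hC 0 0)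
  have hmass (k : ℕ) : HasSum (convPow φ k) 1 := by simpa using hasSum_convPow hφ k
  rcases le_total l l' with h | h
  · rw [max_eq_right h]
    refine sum_range_mul_add_le_of_right_le (convPow_nonneg hφnn l) (hmass l) (by positivity)
      (fun i => ?_) n
    refine (convPow_le_rpow_mul_rpow hφnn hφ.summable hα hβ hB hC l' (by omega)).trans ?_
    gcongr ?_ * ?_
    exact Real.rpow_le_rpow_of_nonpos hm0 (by simp) (by linarith)
  · have hl' : (l' : ℝ) ≤ l + 1 := by exact_mod_cast h.trans l.le_succ
    rw [max_eq_left h]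
    calc ∑ i ∈ Finset.range n, convPow φ l i * convPow φ l' (i + m)
        ≤ C * ((l : ℝ) + 1) ^ (-β) * tailMass (convPow φ l') m :=
          sum_range_mul_add_le_of_left_le (convPow_nonneg hφnn l') (hmass l').summable
            (by positivity) (hC l) m n
      _ ≤ C * ((l : ℝ) + 1) ^ (-β) * (B * (l + 1) * (m : ℝ) ^ (-α)) := by
          gcongr
          exact (hB l' m hm).trans (by gcongr)
      _ = 1 * B * C * ((l : ℝ) + 1) ^ (1 - β) * (m : ℝ) ^ (-α) := by
          rw [sub_eq_neg_add 1 β, Real.rpow_add_one (by positivity)]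
          ring
      _ ≤ _ := by
          gcongr
          exact Real.one_le_rpow one_le_two (by positivity)

lemma min_one_le_rpow {t θ : ℝ} (ht : 0 ≤ t) (hθ0 : 0 ≤ θ) (hθ1 : θ ≤ 1) : min 1 t ≤ t ^ θ := by
  rcases le_total 1 t with h | h
  · exact (min_le_left _ _).trans (Real.one_le_rpow h hθ0)
  · exact (min_le_right _ _).trans (Real.self_le_rpow_of_le_one ht h hθ1)

lemma sum_range_convPow_mul_le_mul_min (hφnn : ∀ i, 0 ≤ φ i) (hφ : HasSum φ 1) {α β B C : ℝ}
    (hα : 0 ≤ α) (hβ : 0 ≤ β)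
    (hB : ∀ l x : ℕ, 0 < x → tailMass (convPow φ l) x ≤ B * l * (x : ℝ) ^ (-α))
    (hC : ∀ l x : ℕ, convPow φ l x ≤ C * ((l : ℝ) + 1) ^ (-β)) (l l' m n : ℕ) :
    ∑ i ∈ Finset.range n, convPow φ l i * convPow φ l' (i + m) ≤
      (1 + 2 ^ (α + β) * B) * C * ((max l l' : ℕ) + 1 : ℝ) ^ (-β) *
        min 1 (((max l l' : ℕ) + 1) * ((max m 1 : ℕ) : ℝ) ^ (-α)) := by
  set L : ℝ := (max l l' : ℕ) + 1
  have hL : 1 ≤ L := by simp [L]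
  have hB0 : 0 ≤ B := by
    simpa using (tailMass_nonneg (convPow_nonneg hφnn 1) 1).trans (hB 1 1 one_pos)
  have hC0 : 0 ≤ C := by simpa using (convPow_nonneg hφnn 0 0).trans (hC 0 0)
  have hunif : ∑ i ∈ Finset.range n, convPow φ l i * convPow φ l' (i + m) ≤
      (1 + 2 ^ (α + β) * B) * C * L ^ (-β) := by
    refine (sum_range_convPow_mul_le hφnn hφ hC l l' m n).trans ?_
    gcongr
    exact le_mul_of_one_le_left hC0 (le_add_of_nonneg_right (by positivity))
  rw [mul_min_of_nonneg _ _ (by positivity), mul_one]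
  refine le_min hunif ?_
  rcases Nat.eq_zero_or_pos m with rfl | hm
  · refine hunif.trans (le_mul_of_one_le_right (by positivity) ?_)
    simpa using hL
  · rw [max_eq_left (Nat.succ_le_of_lt hm)]
    calc ∑ i ∈ Finset.range n, convPow φ l i * convPow φ l' (i + m)
        ≤ 2 ^ (α + β) * B * C * L ^ (1 - β) * (m : ℝ) ^ (-α) :=
          sum_range_convPow_mul_le_of_pos hφnn hφ hα hβ hB hC l l' hm n
      _ ≤ (1 + 2 ^ (α + β) * B) * C * L ^ (1 - β) * (m : ℝ) ^ (-α) := by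
          gcongr
          linarith
      _ = _ := by
          rw [sub_eq_neg_add 1 β, Real.rpow_add_one (by positivity)]
          ring

lemma sum_range_convPow_mul_le_rpow (hφnn : ∀ i, 0 ≤ φ i) (hφ : HasSum φ 1) {α β B C θ : ℝ}
    (hα : 0 ≤ α) (hβ : 0 ≤ β)
    (hB : ∀ l x : ℕ, 0 < x → tailMass (convPow φ l) x ≤ B * l * (x : ℝ) ^ (-α))
    (hC : ∀ l x : ℕ, convPow φ l x ≤ C * ((l : ℝ) + 1) ^ (-β)) (hθ0 : 0 ≤ θ) (hθ1 : θ ≤ 1)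
    (l l' m n : ℕ) :
    ∑ i ∈ Finset.range n, convPow φ l i * convPow φ l' (i + m) ≤
      (1 + 2 ^ (α + β) * B) * C * ((max l l' : ℕ) + 1 : ℝ) ^ (θ - β) *
        ((max m 1 : ℕ) : ℝ) ^ (-(α * θ)) := by
  have hmin := sum_range_convPow_mul_le_mul_min hφnn hφ hα hβ hB hC l l' m n
  set L : ℝ := (max l l' : ℕ) + 1
  set M : ℝ := ((max m 1 : ℕ) : ℝ)
  have hL0 : 0 < L := by positivity
  have hM0 : 0 < M := by positivity
  have hB0 : 0 ≤ B := by
    simpa using (tailMass_nonneg (convPow_nonneg hφnn 1) 1).trans (hB 1 1 one_pos)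
  have hC0 : 0 ≤ C := by simpa using (convPow_nonneg hφnn 0 0).trans (hC 0 0)
  calc _ ≤ (1 + 2 ^ (α + β) * B) * C * L ^ (-β) * min 1 (L * M ^ (-α)) := hmin
    _ ≤ (1 + 2 ^ (α + β) * B) * C * L ^ (-β) * (L * M ^ (-α)) ^ θ := by
        gcongr
        exact min_one_le_rpow (by positivity) hθ0 hθ1
    _ = _ := by
        rw [Real.mul_rpow hL0.le (by positivity), ← Real.rpow_mul hM0.le, neg_mul,
          sub_eq_neg_add θ β, Real.rpow_add hL0]
        ring

end Correlation

/-! ### Summing over the convolution powers -/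

section GeometricSums

lemma sum_range_sum_range_max (f : ℕ → ℝ) (N : ℕ) :
    ∑ l ∈ Finset.range N, ∑ l' ∈ Finset.range N, f (max l l') =
      ∑ L ∈ Finset.range N, (2 * L + 1) * f L := by
  induction N with
  | zero => simp
  | succ N ih =>
    have hcol : ∀ l ∈ Finset.range N, f (max l N) = f N := fun l hl => by
      rw [max_eq_right (Finset.mem_range.1 hl).le]
    have hrow : ∀ l' ∈ Finset.range N, f (max N l') = f N := fun l' hl => by
      rw [max_eq_left (Finset.mem_range.1 hl).le]
    simp only [Finset.sum_range_succ, Finset.sum_add_distrib, ih, Finset.sum_congr rfl hcol,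
      Finset.sum_congr rfl hrow, Finset.sum_const, Finset.card_range, nsmul_eq_mul, max_self]
    ring

lemma sum_range_pow_le {a : ℝ} (ha0 : 0 ≤ a) (ha1 : a < 1) (N : ℕ) :
    ∑ L ∈ Finset.range N, a ^ L ≤ (1 - a)⁻¹ :=
  sum_le_hasSum _ (fun _ _ => pow_nonneg ha0 _) (hasSum_geometric_of_lt_one ha0 ha1)

lemma sum_range_pow_mul_rpow_le_add {γ : ℝ} (hγ0 : 0 < γ) (hγ1 : γ ≤ 1) {a : ℝ} (ha0 : 0 ≤ a)
    (ha1 : a < 1) {x : ℕ} (hx : 0 < x) (N : ℕ) :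
    ∑ L ∈ Finset.range N, a ^ L * ((L : ℝ) + 1) ^ (γ - 1) ≤
      (x : ℝ) ^ γ / γ + (1 - a)⁻¹ * (x : ℝ) ^ (γ - 1) := by
  have hterm : ∀ L ∈ Finset.range N, a ^ L * ((L : ℝ) + 1) ^ (γ - 1) ≤
      (if L < x then ((L : ℝ) + 1) ^ (γ - 1) else 0) + a ^ L * (x : ℝ) ^ (γ - 1) := by
    intro L _
    have haL : 0 ≤ a ^ L := pow_nonneg ha0 L
    split_ifs with hL
    · exact le_add_of_le_of_nonneg
        (mul_le_of_le_one_left (by positivity) (pow_le_one₀ ha0 ha1.le)) (by positivity)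
    · rw [zero_add]
      exact mul_le_mul_of_nonneg_left (Real.rpow_le_rpow_of_nonpos (by exact_mod_cast hx)
        (by exact_mod_cast (by omega)) (by linarith)) haL
  have hsmall : ∑ L ∈ Finset.range N, (if L < x then ((L : ℝ) + 1) ^ (γ - 1) else 0) ≤
      (x : ℝ) ^ γ / γ :=
    calc ∑ L ∈ Finset.range N, (if L < x then ((L : ℝ) + 1) ^ (γ - 1) else 0)
        ≤ ∑ L ∈ Finset.range x, ((L : ℝ) + 1) ^ (γ - 1) := by
          rw [← Finset.sum_filter]
          exact Finset.sum_le_sum_of_subset_of_nonneg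
            (fun L hL => Finset.mem_range.2 (Finset.mem_filter.1 hL).2) fun L _ _ => by positivity
      _ ≤ (x : ℝ) ^ γ / γ := by
          simpa using sum_range_rpow_neg_le (sub_nonneg.2 hγ1) (by linarith) x
  refine (Finset.sum_le_sum hterm).trans ?_
  rw [Finset.sum_add_distrib, ← Finset.sum_mul]
  gcongr
  exact sum_range_pow_le ha0 ha1 N

lemma sum_range_pow_mul_rpow_le {γ : ℝ} (hγ0 : 0 < γ) (hγ1 : γ ≤ 1) {a : ℝ} (ha0 : 0 ≤ a)
    (ha1 : a < 1) (N : ℕ) :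
    ∑ L ∈ Finset.range N, a ^ L * ((L : ℝ) + 1) ^ (γ - 1) ≤
      (2 / γ + 1) * (1 - a) ^ (-γ) := by
  have hb : 0 < 1 - a := sub_pos.2 ha1
  set x := ⌈(1 - a)⁻¹⌉₊
  have hx_ge : (1 - a)⁻¹ ≤ x := Nat.le_ceil _
  have hx_le : (x : ℝ) ≤ 2 * (1 - a)⁻¹ := by
    have := Nat.ceil_lt_add_one (inv_nonneg.2 hb.le)
    have := (one_le_inv₀ hb).2 (sub_le_self 1 ha0)
    linarith
  calc ∑ L ∈ Finset.range N, a ^ L * ((L : ℝ) + 1) ^ (γ - 1)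
      ≤ (x : ℝ) ^ γ / γ + (1 - a)⁻¹ * (x : ℝ) ^ (γ - 1) :=
        sum_range_pow_mul_rpow_le_add hγ0 hγ1 ha0 ha1 (Nat.ceil_pos.2 (inv_pos.2 hb)) N
    _ ≤ (2 * (1 - a)⁻¹) ^ γ / γ + (1 - a)⁻¹ * (1 - a)⁻¹ ^ (γ - 1) := by
        gcongr ?_ ^ γ / γ + _ * ?_
        exact Real.rpow_le_rpow_of_nonpos (inv_pos.2 hb) hx_ge (by linarith)
    _ ≤ 2 * (1 - a)⁻¹ ^ γ / γ + (1 - a)⁻¹ * (1 - a)⁻¹ ^ (γ - 1) := by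
        rw [Real.mul_rpow zero_le_two (by positivity)]
        gcongr
        simpa using Real.rpow_le_rpow_of_exponent_le one_le_two hγ1
    _ = (2 / γ + 1) * (1 - a) ^ (-γ) := by
        rw [mul_comm (1 - a)⁻¹, ← Real.rpow_add_one (by positivity), sub_add_cancel,
          Real.inv_rpow hb.le, Real.rpow_neg hb.le]
        ring

variable {φ : ℕ → ℝ}

lemma psiSeq_eq_sum_range (hφ0 : φ 0 = 0) (a : ℝ) {i N : ℕ} (hN : i < N) :
    psiSeq a φ i = ∑ l ∈ Finset.range N, a ^ l * convPow φ l i :=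
  tsum_eq_sum fun l hl => by
    rw [convPow_eq_zero_of_lt hφ0 (by simp only [Finset.mem_range] at hl; omega), mul_zero]

lemma sum_range_psiSeq_mul_eq (hφ0 : φ 0 = 0) (a : ℝ) (n m : ℕ) :
    ∑ i ∈ Finset.range n, psiSeq a φ i * psiSeq a φ (i + m) =
      ∑ l ∈ Finset.range (n + m), ∑ l' ∈ Finset.range (n + m),
        a ^ l * a ^ l' * ∑ i ∈ Finset.range n, convPow φ l i * convPow φ l' (i + m) := by
  have hexpand : ∀ i ∈ Finset.range n, psiSeq a φ i * psiSeq a φ (i + m) =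
      ∑ l ∈ Finset.range (n + m), ∑ l' ∈ Finset.range (n + m),
        a ^ l * a ^ l' * (convPow φ l i * convPow φ l' (i + m)) := by
    intro i hi
    have hin := Finset.mem_range.1 hi
    rw [psiSeq_eq_sum_range hφ0 a (by omega : i < n + m),
      psiSeq_eq_sum_range hφ0 a (by omega : i + m < n + m), Finset.sum_mul_sum]
    exact Finset.sum_congr rfl fun l _ => Finset.sum_congr rfl fun l' _ => by ring
  rw [Finset.sum_congr rfl hexpand, Finset.sum_comm]
  refine Finset.sum_congr rfl fun l _ => ?_
  rw [Finset.sum_comm]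
  simp only [Finset.mul_sum]

lemma sum_range_psiSeq_mul_le (hφ0 : φ 0 = 0) {D γ : ℝ} (hγ0 : 0 < γ) (hγ1 : γ ≤ 1) {m n : ℕ}
    (hD : ∀ l l', ∑ i ∈ Finset.range n, convPow φ l i * convPow φ l' (i + m) ≤
      D * ((max l l' : ℕ) + 1 : ℝ) ^ (γ - 2)) (hD0 : 0 ≤ D) {a : ℝ} (ha0 : 0 ≤ a) (ha1 : a < 1) :
    ∑ i ∈ Finset.range n, psiSeq a φ i * psiSeq a φ (i + m) ≤
      2 * (2 / γ + 1) * D * (1 - a) ^ (-γ) := by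
  have hterm (l l' : ℕ) :
      a ^ l * a ^ l' * ∑ i ∈ Finset.range n, convPow φ l i * convPow φ l' (i + m) ≤
        D * (a ^ max l l' * ((max l l' : ℕ) + 1 : ℝ) ^ (γ - 2)) := by
    have hpow : a ^ l * a ^ l' ≤ a ^ max l l' := by
      rw [← pow_add]
      exact pow_le_pow_of_le_one ha0 ha1.le (max_le (by omega) (by omega))
    calc _ ≤ a ^ l * a ^ l' * (D * ((max l l' : ℕ) + 1 : ℝ) ^ (γ - 2)) := by
          gcongr
          exact hD l l'
      _ ≤ a ^ max l l' * (D * ((max l l' : ℕ) + 1 : ℝ) ^ (γ - 2)) := by gcongr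
      _ = _ := by ring
  have hweight (L : ℕ) : (2 * (L : ℝ) + 1) * (D * (a ^ L * ((L : ℝ) + 1) ^ (γ - 2))) ≤
      2 * D * (a ^ L * ((L : ℝ) + 1) ^ (γ - 1)) :=
    calc _ ≤ 2 * ((L : ℝ) + 1) * (D * (a ^ L * ((L : ℝ) + 1) ^ (γ - 2))) := by
          gcongr
          linarith
      _ = _ := by
          rw [show γ - 1 = γ - 2 + 1 by ring, Real.rpow_add_one (by positivity)]
          ring
  rw [sum_range_psiSeq_mul_eq hφ0]
  calc _ ≤ ∑ l ∈ Finset.range (n + m), ∑ l' ∈ Finset.range (n + m),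
          D * (a ^ max l l' * ((max l l' : ℕ) + 1 : ℝ) ^ (γ - 2)) :=
        Finset.sum_le_sum fun l _ => Finset.sum_le_sum fun l' _ => hterm l l'
    _ = ∑ L ∈ Finset.range (n + m), (2 * L + 1) * (D * (a ^ L * ((L : ℝ) + 1) ^ (γ - 2))) :=
        sum_range_sum_range_max (fun L => D * (a ^ L * ((L : ℝ) + 1) ^ (γ - 2))) _
    _ ≤ 2 * D * ((2 / γ + 1) * (1 - a) ^ (-γ)) := by
        refine (Finset.sum_le_sum fun L _ => hweight L).trans ?_
        rw [← Finset.mul_sum]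
        gcongr
        exact sum_range_pow_mul_rpow_le hγ0 hγ1 ha0 ha1 _
    _ = _ := by ring

end GeometricSums

/-! ### The autoregressive process -/

section Autoregression

variable {φ : ℕ → ℝ}

lemma mk_psiSeq_mul_one_sub (hφ0 : φ 0 = 0) (a : ℝ) :
    PowerSeries.mk (psiSeq a φ) * (1 - a • PowerSeries.mk φ) = 1 := by
  ext k
  have hpartial {i : ℕ} (hi : i < k + 1) : psiSeq a φ i =
      PowerSeries.coeff i (∑ l ∈ Finset.range (k + 1), (a • PowerSeries.mk φ) ^ l) := by
    simp only [psiSeq_eq_sum_range hφ0 a hi, map_sum, smul_pow, PowerSeries.coeff_smul,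
      smul_eq_mul, convPow_eq_coeff]
  have hremainder : PowerSeries.coeff k ((a • PowerSeries.mk φ) ^ (k + 1)) = 0 := by
    rw [smul_pow, PowerSeries.coeff_smul, ← convPow_eq_coeff,
      convPow_eq_zero_of_lt hφ0 k.lt_succ_self, smul_zero]
  calc PowerSeries.coeff k (PowerSeries.mk (psiSeq a φ) * (1 - a • PowerSeries.mk φ))
      = PowerSeries.coeff k ((∑ l ∈ Finset.range (k + 1), (a • PowerSeries.mk φ) ^ l) *
          (1 - a • PowerSeries.mk φ)) := by
        simp only [PowerSeries.coeff_mul, PowerSeries.coeff_mk]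
        refine Finset.sum_congr rfl fun p hp => ?_
        rw [hpartial (Nat.lt_succ_of_le (Finset.HasAntidiagonal.antidiagonal.fst_le hp))]
    _ = PowerSeries.coeff k 1 := by rw [geom_sum_mul_neg, map_sub, hremainder, sub_zero]

lemma eq_sum_psiSeq_mul (hφ0 : φ 0 = 0) {a : ℝ} {ε y : ℕ → ℝ}
    (hy : ∀ k, y k = ε k + ∑ i ∈ Finset.Icc 1 k, a * φ i * y (k - i)) (k : ℕ) :
    y k = ∑ j ∈ Finset.range (k + 1), psiSeq a φ (k - j) * ε j := by
  have hmk : (1 - a • PowerSeries.mk φ) * PowerSeries.mk y = PowerSeries.mk ε := by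
    ext k
    have hrec : PowerSeries.coeff k (a • PowerSeries.mk φ * PowerSeries.mk y) =
        ∑ i ∈ Finset.Icc 1 k, a * φ i * y (k - i) := by
      rw [PowerSeries.coeff_mul, Finset.Nat.sum_antidiagonal_eq_sum_range_succ_mk,
        Finset.sum_range_eq_add_Ico _ k.succ_pos]
      simp [hφ0, Finset.Ico_add_one_right_eq_Icc]
    rw [sub_mul, one_mul, map_sub, hrec, PowerSeries.coeff_mk, PowerSeries.coeff_mk, hy k,
      add_sub_cancel_right]
  have hsol : PowerSeries.mk y = PowerSeries.mk ε * PowerSeries.mk (psiSeq a φ) := by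
    rw [← hmk, mul_comm, ← mul_assoc, mk_psiSeq_mul_one_sub hφ0, one_mul]
  simpa [PowerSeries.coeff_mul, Finset.Nat.sum_antidiagonal_eq_sum_range_succ_mk, mul_comm]
    using congrArg (PowerSeries.coeff k) hsol

variable {Ω : Type*} [MeasurableSpace Ω] {P : Measure Ω}

/-- A sequence of functions that is orthonormal in `L²(P)`, stated through representatives and
integrals rather than classes in `Lp`. This is all that the covariances of the process see of the
law of its innovations. -/
structure IsOrthonormalNoise (ε : ℕ → Ω → ℝ) (P : Measure Ω) : Prop where
  memLp : ∀ k, MemLp (ε k) 2 P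
  integral_mul : ∀ i j, ∫ ω, ε i ω * ε j ω ∂P = if i = j then 1 else 0

lemma isOrthonormalNoise_of_iIndepFun {ε : ℕ → Ω → ℝ} (hindep : iIndepFun ε P)
    (hid : ∀ k, IdentDistrib (ε k) (ε 0) P P) (hL2 : MemLp (ε 0) 2 P)
    (hmean : ∫ ω, ε 0 ω ∂P = 0) (hvar : ∫ ω, (ε 0 ω) ^ 2 ∂P = 1) : IsOrthonormalNoise ε P where
  memLp k := (hid k).memLp_iff.2 hL2
  integral_mul i j := by
    split_ifs with hij
    · subst hij
      simp only [← sq, ← hvar]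
      exact ((hid i).comp (measurable_id.pow_const 2)).integral_eq
    · rw [(hindep.indepFun hij).integral_fun_mul_eq_mul_integral
        (hid i).aemeasurable_fst.aestronglyMeasurable
        (hid j).aemeasurable_fst.aestronglyMeasurable, (hid i).integral_eq, hmean, zero_mul]

lemma IsOrthonormalNoise.integral_sum_mul_sum {ε : ℕ → Ω → ℝ} (hε : IsOrthonormalNoise ε P)
    (u v : ℕ → ℝ) (s t : Finset ℕ) :
    ∫ ω, (∑ i ∈ s, u i * ε i ω) * (∑ j ∈ t, v j * ε j ω) ∂P = ∑ i ∈ s ∩ t, u i * v i := by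
  have hint (i j : ℕ) : Integrable (fun ω => u i * v j * (ε i ω * ε j ω)) P :=
    ((hε.memLp i).integrable_mul (hε.memLp j)).const_mul _
  have hexpand (ω : Ω) : (∑ i ∈ s, u i * ε i ω) * (∑ j ∈ t, v j * ε j ω) =
      ∑ i ∈ s, ∑ j ∈ t, u i * v j * (ε i ω * ε j ω) := by
    rw [Finset.sum_mul_sum]
    exact Finset.sum_congr rfl fun i _ => Finset.sum_congr rfl fun j _ => by ring
  simp only [hexpand]
  rw [integral_finsetSum _ fun i _ => integrable_finsetSum _ fun j _ => hint i j]
  simp only [integral_finsetSum _ fun j _ => hint _ j, integral_const_mul, hε.integral_mul,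
    mul_ite, mul_one, mul_zero, Finset.sum_ite_eq, ← Finset.sum_ite_mem]

lemma IsOrthonormalNoise.integral_autoregression_mul_eq {ε y : ℕ → Ω → ℝ}
    (hε : IsOrthonormalNoise ε P) (hφ0 : φ 0 = 0) {a : ℝ}
    (hy : ∀ k ω, y k ω = ε k ω + ∑ i ∈ Finset.Icc 1 k, a * φ i * y (k - i) ω) (k m : ℕ) :
    ∫ ω, y k ω * y (k + m) ω ∂P =
      ∑ i ∈ Finset.range (k + 1), psiSeq a φ i * psiSeq a φ (i + m) := by
  have hsol (ω : Ω) (k : ℕ) := eq_sum_psiSeq_mul (y := fun k => y k ω) hφ0 (fun k => hy k ω) k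
  have hinter : Finset.range (k + 1) ∩ Finset.range (k + m + 1) = Finset.range (k + 1) :=
    Finset.inter_eq_left.2 (Finset.range_subset_range.2 (by omega))
  simp only [hsol]
  rw [hε.integral_sum_mul_sum, hinter, ← Finset.sum_range_reflect]
  refine Finset.sum_congr rfl fun i hi => ?_
  have := Finset.mem_range.1 hi
  congr 2 <;> omega

end Autoregression

/-! ### Power-law tails -/

section PowerTail

variable {φ : ℕ → ℝ} {α : ℝ}

lemma exists_tailMass_succ_le_rpow (h : tailMass φ =O[atTop] fun N : ℕ => (N : ℝ) ^ (-α)) :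
    ∃ B, ∀ N : ℕ, tailMass φ (N + 1) ≤ B * ((N : ℝ) + 1) ^ (-α) := by
  have hpos (N : ℕ) : 0 < ((N + 1 : ℕ) : ℝ) ^ (-α) := by positivity
  obtain ⟨B, hB⟩ := (Asymptotics.isBigO_nat_atTop_iff fun N hN => absurd hN (hpos N).ne').1
    (h.comp_tendsto (tendsto_add_atTop_nat 1))
  refine ⟨B, fun N => (le_abs_self _).trans ?_⟩
  have hBN := hB N
  simp only [Function.comp_apply, Real.norm_eq_abs, abs_of_pos (hpos N)] at hBN
  simpa using hBN

lemma exists_mul_rpow_le_sum_Ico (hφnn : ∀ i, 0 ≤ φ i) (hφ : Summable φ) (hα : 0 < α)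
    (h : tailMass φ =Θ[atTop] fun N : ℕ => (N : ℝ) ^ (-α)) :
    ∃ κ > 0, ∃ R N₀ : ℕ, 0 < R ∧
      ∀ N ≥ N₀, κ * (N : ℝ) ^ (-α) ≤ ∑ j ∈ Finset.Ico N (R * N), φ j := by
  obtain ⟨c, hc, hupper⟩ := h.1.exists_pos
  obtain ⟨d, hd, hlower⟩ := h.2.exists_pos
  have hrpow (N : ℕ) : |(N : ℝ) ^ (-α)| = (N : ℝ) ^ (-α) := abs_of_nonneg (by positivity)
  simp only [Asymptotics.isBigOWith_iff, Real.norm_eq_abs, hrpow,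
    abs_of_nonneg (tailMass_nonneg hφnn _)] at hupper hlower
  obtain ⟨N₀, hN₀⟩ := eventually_atTop.1 (hupper.and hlower)
  obtain ⟨R, hR, hR1⟩ : ∃ R : ℕ, (R : ℝ) ^ (-α) ≤ (2 * d * c)⁻¹ ∧ 1 ≤ R :=
    ((((tendsto_rpow_neg_atTop hα).comp tendsto_natCast_atTop_atTop).eventually_le_const
      (by positivity : 0 < (2 * d * c)⁻¹)).and (eventually_ge_atTop 1)).exists
  refine ⟨(2 * d)⁻¹, by positivity, R, N₀, hR1, fun N hN => ?_⟩
  have hNR : N ≤ R * N := Nat.le_mul_of_pos_left N hR1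
  have hhead : d⁻¹ * (N : ℝ) ^ (-α) ≤ tailMass φ N := (inv_mul_le_iff₀ hd).2 (hN₀ N hN).2
  have hfar : tailMass φ (R * N) ≤ (2 * d)⁻¹ * (N : ℝ) ^ (-α) :=
    calc tailMass φ (R * N) ≤ c * ((R * N : ℕ) : ℝ) ^ (-α) := (hN₀ _ (hN.trans hNR)).1
      _ = c * (R : ℝ) ^ (-α) * (N : ℝ) ^ (-α) := by
          rw [Nat.cast_mul, Real.mul_rpow R.cast_nonneg N.cast_nonneg, mul_assoc]
      _ ≤ c * (2 * d * c)⁻¹ * (N : ℝ) ^ (-α) := by gcongr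
      _ = (2 * d)⁻¹ * (N : ℝ) ^ (-α) := by field_simp
  rw [sum_Ico_eq_tailMass_sub hφ hNR]
  calc (2 * d)⁻¹ * (N : ℝ) ^ (-α) = d⁻¹ * (N : ℝ) ^ (-α) - (2 * d)⁻¹ * (N : ℝ) ^ (-α) := by
        field_simp
        ring
    _ ≤ _ := sub_le_sub hhead hfar

lemma exists_sum_range_psiSeq_mul_le (hφnn : ∀ i, 0 ≤ φ i) (hφ0 : φ 0 = 0) (hφ : HasSum φ 1)
    (hα0 : 0 < α) (hα1 : α < 1) (h : tailMass φ =Θ[atTop] fun N : ℕ => (N : ℝ) ^ (-α))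
    {θ : ℝ} (hθ0 : 0 ≤ θ) (hθ1 : θ ≤ 1) (hαθ : 0 < 2 + θ - 1 / α) (hαθ' : 2 + θ - 1 / α ≤ 1) :
    ∃ c > 0, ∀ a, 0 ≤ a → a < 1 → ∀ m n : ℕ,
      ∑ i ∈ Finset.range n, psiSeq a φ i * psiSeq a φ (i + m) ≤
        c * ((1 - a) ^ (-(2 + θ - 1 / α)) * ((max m 1 : ℕ) : ℝ) ^ (-(α * θ))) := by
  obtain ⟨κ, hκ, R, N₀, hR, hblock⟩ := exists_mul_rpow_le_sum_Ico hφnn hφ.summable hα0 h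
  obtain ⟨C, hC⟩ := exists_convPow_le_rpow hφnn hφ hα0 hκ hR hblock
  obtain ⟨A, hA⟩ := exists_tailMass_succ_le_rpow h.1
  have : 0 < 1 - α := sub_pos.2 hα1
  have hA0 : 0 ≤ A := by simpa using (tailMass_nonneg hφnn _).trans (hA 0)
  have hC0 : 0 < C := one_pos.trans_le (by simpa [convPow] using hC 0 0)
  refine ⟨2 * (2 / (2 + θ - 1 / α) + 1) * ((1 + 2 ^ (α + 1 / α) * (A / (1 - α))) * C),
    by positivity, fun a ha0 ha1 m n => ?_⟩
  refine (sum_range_psiSeq_mul_le hφ0 hαθ hαθ'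
    (D := (1 + 2 ^ (α + 1 / α) * (A / (1 - α))) * C * ((max m 1 : ℕ) : ℝ) ^ (-(α * θ)))
    (fun l l' => ?_) (by positivity) ha0 ha1).trans_eq (by ring)
  refine (sum_range_convPow_mul_le_rpow hφnn hφ hα0.le (by positivity)
    (fun l x hx => tailMass_convPow_le_rpow hφnn hφ hα0.le hα1 hA l hx) hC hθ0 hθ1
    l l' m n).trans_eq ?_
  rw [show 2 + θ - 1 / α - 2 = θ - 1 / α by ring]
  ring

end PowerTail

lemma rpow_neg_mul_rpow_neg_le {b x θ e : ℝ} (hb : 0 < b) (hx : 0 < x) (hθ0 : 0 ≤ θ)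
    (hθe : θ ≤ 2 * e) : b ^ (-θ) * x ^ (-(θ / 2)) ≤ 1 + (b ^ 2 * x) ^ (-e) := by
  have hz : 0 < b ^ 2 * x := by positivity
  calc b ^ (-θ) * x ^ (-(θ / 2)) = (b ^ 2 * x) ^ (-(θ / 2)) := by
        rw [Real.mul_rpow (sq_nonneg b) hx.le, ← Real.rpow_natCast, ← Real.rpow_mul hb.le]
        congr 2
        push_cast
        ring
    _ ≤ 1 + (b ^ 2 * x) ^ (-e) := by
        rcases le_total 1 (b ^ 2 * x) with h | h
        · exact (Real.rpow_le_one_of_one_le_of_nonpos h (by linarith)).trans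
            (le_add_of_nonneg_right (by positivity))
        · exact (Real.rpow_le_rpow_of_exponent_ge hz h (by linarith)).trans
            (le_add_of_nonneg_left zero_le_one)

theorem ar_covariance_bound_critical_general {Ω : Type*} [MeasurableSpace Ω] (P : Measure Ω)
    {φ : ℕ → ℝ} (hφnn : ∀ i, 0 ≤ φ i) (hφ0 : φ 0 = 0) (hφ : HasSum φ 1)
    (htail : tailMass φ =Θ[atTop] fun N : ℕ => (N : ℝ) ^ (-(1 / 2) : ℝ)) {e : ℝ} (he : 0 < e) :
    ∃ c > 0, ∀ a, 0 ≤ a → a < 1 → ∀ ε y : ℕ → Ω → ℝ, IsOrthonormalNoise ε P →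
      (∀ k ω, y k ω = ε k ω + ∑ i ∈ Finset.Icc 1 k, a * φ i * y (k - i) ω) → ∀ k k' : ℕ,
        (k = k' → ∫ ω, y k ω * y k' ω ∂P ≤ c * (1 - a) ^ (-e)) ∧
        (k ≠ k' → ∫ ω, y k ω * y k' ω ∂P ≤
          c + c * ((1 - a) ^ 2 * |(k : ℝ) - (k' : ℝ)|) ^ (-e)) := by
  have hθ0 : 0 < min e 1 := lt_min he one_pos
  obtain ⟨c, hc, hψ⟩ := exists_sum_range_psiSeq_mul_le (θ := min e 1) hφnn hφ0 hφ (by norm_num)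
    (by norm_num) htail hθ0.le (min_le_right _ _) (by norm_num [he]) (by norm_num)
  refine ⟨c, hc, fun a ha0 ha1 ε y hε hy k k' => ?_⟩
  have hb : 0 < 1 - a := sub_pos.2 ha1
  wlog hkk' : k ≤ k' generalizing k k'
  · simpa only [eq_comm, ne_comm, abs_sub_comm, mul_comm] using this k' k (le_of_not_ge hkk')
  obtain ⟨m, rfl⟩ := Nat.exists_eq_add_of_le hkk'
  have hcov : ∫ ω, y k ω * y (k + m) ω ∂P ≤
      c * ((1 - a) ^ (-min e 1) * ((max m 1 : ℕ) : ℝ) ^ (-(min e 1 / 2))) := by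
    rw [hε.integral_autoregression_mul_eq hφ0 hy]
    convert hψ a ha0 ha1 m (k + 1) using 4 <;> ring
  refine ⟨fun hk => ?_, fun hk => ?_⟩
  · obtain rfl : m = 0 := by omega
    refine hcov.trans (mul_le_mul_of_nonneg_left ?_ hc.le)
    simpa using Real.rpow_le_rpow_of_exponent_ge hb (by linarith) (neg_le_neg (min_le_left e 1))
  · have hm : 1 ≤ m := by omega
    rw [max_eq_left hm] at hcov
    rw [Nat.cast_add, sub_add_cancel_left, abs_neg, Nat.abs_cast, ← mul_one_add]
    refine hcov.trans (mul_le_mul_of_nonneg_left ?_ hc.le)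
    exact rpow_neg_mul_rpow_neg_le hb (by exact_mod_cast hm) hθ0.le
      (by linarith [min_le_left e 1])

/-- heavy-tail bound, critical case `α = 1/2`. -/
theorem ar_covariance_bound_critical
    {Ω : Type*} [MeasurableSpace Ω] (P : Measure Ω) [IsProbabilityMeasure P]
    (φ : ℕ → ℝ) (hφnn : ∀ i, 0 ≤ φ i) (hφ0 : φ 0 = 0) (hφsum : ∑' i : ℕ, φ i = 1)
    (K : ℝ) (hK : 0 < K)
    (htail : Tendsto (fun N : ℕ => (N : ℝ) ^ (1/2 : ℝ) * ∑' i : ℕ, φ (N + i))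
      atTop (nhds K))
    (δ : ℝ) (hδ : δ = K * Real.Gamma (1/2) / (1/2))
    (a : ℕ → ℝ) (ha : ∀ n, 1 ≤ n → 0 < a n ∧ a n < 1)
    (lam : ℝ) (hlam : 0 < lam)
    (haconv : Tendsto (fun n : ℕ => (n : ℝ) ^ (1/2 : ℝ) * (1 - a n))
      atTop (nhds (lam * δ)))
    -- the `ε_k` are iid, square integrable, centered with unit variance
    (ε : ℕ → Ω → ℝ) (hεmeas : ∀ k, Measurable (ε k))
    (hεindep : iIndepFun ε P)
    (hεid : ∀ k, Measure.map (ε k) P = Measure.map (ε 0) P)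
    (hεL2 : MemLp (ε 0) 2 P)
    (hεmean : ∫ ω, ε 0 ω ∂P = 0)
    (hεvar : ∫ ω, (ε 0 ω) ^ 2 ∂P = 1)
    (y : ℕ → ℕ → Ω → ℝ)
    (hy0 : ∀ n, y n 0 = ε 0)
    (hyrec : ∀ n k, 1 ≤ k → ∀ ω,
      y n k ω = ε k ω + ∑ i ∈ Finset.Icc 1 k, a n * φ i * y n (k - i) ω)
    : ∀ e : ℝ, 0 < e → e < 1 →
      ∃ c > 0, ∀ n, 1 ≤ n → ∀ k k' : ℕ,
        (k = k' → ∫ ω, y n k ω * y n k' ω ∂P ≤ c * (1 - a n) ^ (-e)) ∧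
        (k ≠ k' → ∫ ω, y n k ω * y n k' ω ∂P ≤
          c + c * ((1 - a n) ^ 2 * |(k : ℝ) - (k' : ℝ)|) ^ (-e)) := by
  intro e he _
  have hsummable : Summable φ := by
    by_contra h
    simp [tsum_eq_zero_of_not_summable h] at hφsum
  have hφ : HasSum φ 1 := hφsum ▸ hsummable.hasSum
  have hΘ : tailMass φ =Θ[atTop] fun N : ℕ => (N : ℝ) ^ (-(1 / 2) : ℝ) := by
    refine (Asymptotics.isTheta_of_div_tendsto_nhds_ne_zero (htail.congr fun N => ?_) hK.ne').symm
    rw [Real.rpow_neg N.cast_nonneg, div_inv_eq_mul, mul_comm, tailMass]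
  have hε : IsOrthonormalNoise ε P := isOrthonormalNoise_of_iIndepFun hεindep
    (fun k => ⟨(hεmeas k).aemeasurable, (hεmeas 0).aemeasurable, hεid k⟩) hεL2 hεmean hεvar
  obtain ⟨c, hc, hbound⟩ := ar_covariance_bound_critical_general P hφnn hφ0 hφ hΘ he
  refine ⟨c, hc, fun n hn => hbound (a n) (ha n hn).1.le (ha n hn).2 ε (y n) hε fun k ω => ?_⟩
  rcases Nat.eq_zero_or_pos k with rfl | hk
  · simp [hy0]
  · exact hyrec n k hk ω
end

section
/- (Kolmogorov moment bound for the Donsker line, light-tail case.) Let φ : ℕ → ℝ with φ_i ≥ 0, φ_0 = 0, ∑_{i=1}^∞ φ_i = 1, and assume m := ∑_{i=1}^∞ i φ_i < ∞. Let (a_n)_{n≥1} satisfy 0 < a_n < 1 and n(1−a_n) → λ for some λ > 0. Let (ε_k)_{k≥0} be iid real random variables with E[ε_0] = 0 and E[ε_0²] = 1, define y^n_0 = ε_0, y^n_k = ε_k + ∑_{i=1}^k a_n φ_i y^n_{k−i} for k ≥ 1, and set Z^n_t = ((1−a_n)/√n)(∑_{j=0}^{⌊nt⌋} y^n_j + (nt−⌊nt⌋)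 y^n_{⌊nt⌋+1}) for t ∈ [0,1]. Then there exists c > 0 such that for every n ≥ 1 and all s, t ∈ [0,1], E[|Z^n_t − Z^n_s|²] ≤ c |t−s|². -/
open MeasureTheory ProbabilityTheory Filter Set

/-!
Writing `Ψ = 1 / (1 - ∑ θ_i X^i)`, the recursion `y = ε + θ ∗ y` is solved by `y = ψ ∗ ε`, and
`|ψ_k| ≤ 1` as soon as `∑ |θ_i| ≤ 1`. Hence, for orthonormal noise, `y_k` has norm at most
`√(k + 1)` in `L²`. The unscaled Donsker line is a polygonal path in the Hilbert space `L²` whose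
first `n` steps have length at most `√(n + 1)`, so it is `√(n + 1)`-Lipschitz on `[0, n]`. After
rescaling, the Lipschitz constant on `[0, 1]` is `n * (1 - a_n) * √((n + 1) / n)`, which is bounded.
-/

section ImpulseResponse

open PowerSeries

/-- The generating series `∑_{i ≥ 1} θ_i X^i` of the weights of an autoregression. The value `θ 0`
is discarded, since a lag is at least `1`. -/
noncomputable def lagSeries {R : Type*} [Semiring R] (θ : ℕ → R) : R⟦X⟧ :=
  PowerSeries.mk fun i => if i = 0 then 0 else θ i

/-- The response at time `k` of the autoregression with weights `θ` to a unit impulse at time `0`,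
encoded as a coefficient of `1 / (1 - ∑_{i ≥ 1} θ_i X^i)`. -/
noncomputable def impulseResponse {K : Type*} [Field K] (θ : ℕ → K) (k : ℕ) : K :=
  coeff k (1 - lagSeries θ)⁻¹

theorem coeff_lagSeries_mul {R : Type*} [Semiring R] (θ : ℕ → R) (f : R⟦X⟧) (k : ℕ) :
    coeff k (lagSeries θ * f) = ∑ i ∈ Finset.Icc 1 k, θ i * coeff (k - i) f := by
  rw [coeff_mul, Finset.Nat.sum_antidiagonal_eq_sum_range_succ_mk,
    Finset.sum_range_eq_add_Ico _ k.succ_pos,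
    Nat.succ_eq_add_one, Finset.Ico_add_one_right_eq_Icc]
  simp only [lagSeries, coeff_mk, if_true, zero_mul, zero_add]
  refine Finset.sum_congr rfl fun i hi => ?_
  rw [if_neg (Nat.one_le_iff_ne_zero.1 (Finset.mem_Icc.1 hi).1)]

theorem constantCoeff_one_sub_lagSeries {R : Type*} [Ring R] (θ : ℕ → R) :
    constantCoeff (1 - lagSeries θ) = 1 := by
  simp [lagSeries]

theorem impulseResponse_eq {K : Type*} [Field K] (θ : ℕ → K) (k : ℕ) :
    impulseResponse θ k =
      (if k = 0 then 1 else 0) + ∑ i ∈ Finset.Icc 1 k, θ i * impulseResponse θ (k - i) := by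
  have hΨ : (1 - lagSeries θ)⁻¹ = 1 + lagSeries θ * (1 - lagSeries θ)⁻¹ := by
    have := PowerSeries.mul_inv_cancel (1 - lagSeries θ)
      (by simp [constantCoeff_one_sub_lagSeries])
    linear_combination this
  simpa only [impulseResponse, map_add, coeff_one, coeff_lagSeries_mul] using congrArg (coeff k) hΨ

theorem norm_impulseResponse_le_one {K : Type*} [NormedField K] {θ : ℕ → K}
    (hθ : ∀ k, ∑ i ∈ Finset.Icc 1 k, ‖θ i‖ ≤ 1) (k : ℕ) : ‖impulseResponse θ k‖ ≤ 1 := by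
  induction k using Nat.strong_induction_on with
  | _ k ih =>
    rw [impulseResponse_eq]
    obtain rfl | hk := eq_or_ne k 0
    · simp
    rw [if_neg hk, zero_add]
    refine (norm_sum_le_of_le _ fun i hi => ?_).trans (hθ k)
    have hi' := Finset.mem_Icc.1 hi
    rw [norm_mul]
    exact mul_le_of_le_one_right (norm_nonneg _) (ih (k - i) (by omega))

theorem eq_sum_impulseResponse_mul {K : Type*} [Field K] {θ e y : ℕ → K}
    (hy : ∀ k, y k = e k + ∑ i ∈ Finset.Icc 1 k, θ i * y (k - i)) (k : ℕ) :
    y k = ∑ l ∈ Finset.range (k + 1), impulseResponse θ (k - l) * e l := by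
  have hY : PowerSeries.mk y * (1 - lagSeries θ) = PowerSeries.mk e := by
    have : PowerSeries.mk y = PowerSeries.mk e + lagSeries θ * PowerSeries.mk y := by
      ext k
      simpa only [map_add, coeff_lagSeries_mul, coeff_mk] using hy k
    linear_combination this
  rw [← PowerSeries.eq_mul_inv_iff_mul_eq (by simp [constantCoeff_one_sub_lagSeries])] at hY
  rw [← coeff_mk k y, hY, coeff_mul, Finset.Nat.sum_antidiagonal_eq_sum_range_succ_mk]
  exact Finset.sum_congr rfl fun l _ => by rw [coeff_mk, mul_comm, impulseResponse]

end ImpulseResponse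

section PolygonalLine

/-- The partial sums `u_0 + ⋯ + u_k`, as a function of `k`, interpolated linearly to a path on
`[0, ∞)`. -/
noncomputable def polygonalLine {E : Type*} [AddCommGroup E] [Module ℝ E] (u : ℕ → E) (x : ℝ) : E :=
  ∑ j ∈ Finset.range (⌊x⌋₊ + 1), u j + (x - ⌊x⌋₊) • u (⌊x⌋₊ + 1)

theorem polygonalLine_eq_of_mem_Icc {E : Type*} [AddCommGroup E] [Module ℝ E] (u : ℕ → E) {k : ℕ}
    {x : ℝ} (hx : x ∈ Icc (k : ℝ) (k + 1)) :
    polygonalLine u x = ∑ j ∈ Finset.range (k + 1), u j + (x - k) • u (k + 1) := by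
  obtain hlt | rfl := hx.2.lt_or_eq
  · rw [polygonalLine, (Nat.floor_eq_iff (k.cast_nonneg.trans hx.1)).2 ⟨hx.1, hlt⟩]
  · have hfloor : ⌊(k : ℝ) + 1⌋₊ = k + 1 := mod_cast Nat.floor_natCast (k + 1)
    rw [polygonalLine, hfloor]
    simp [Finset.sum_range_succ _ (k + 1)]

theorem polygonalLine_sub_of_mem_Icc {E : Type*} [AddCommGroup E] [Module ℝ E] (u : ℕ → E) {k : ℕ}
    {s t : ℝ} (hs : s ∈ Icc (k : ℝ) (k + 1)) (ht : t ∈ Icc (k : ℝ) (k + 1)) :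
    polygonalLine u t - polygonalLine u s = (t - s) • u (k + 1) := by
  rw [polygonalLine_eq_of_mem_Icc u hs, polygonalLine_eq_of_mem_Icc u ht]
  module

variable {E : Type*} [SeminormedAddCommGroup E] [NormedSpace ℝ E] {u : ℕ → E} {M s t : ℝ}

theorem norm_polygonalLine_sub_le_of_mem_Icc {k : ℕ} (hu : ‖u (k + 1)‖ ≤ M)
    (hs : s ∈ Icc (k : ℝ) (k + 1)) (ht : t ∈ Icc (k : ℝ) (k + 1)) (hst : s ≤ t) :
    ‖polygonalLine u t - polygonalLine u s‖ ≤ M * (t - s) := by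
  rw [polygonalLine_sub_of_mem_Icc u hs ht, norm_smul, Real.norm_of_nonneg (sub_nonneg.2 hst),
    mul_comm]
  exact mul_le_mul_of_nonneg_right hu (sub_nonneg.2 hst)

theorem norm_polygonalLine_sub_le_of_le {N : ℕ} (hu : ∀ j < N, ‖u (j + 1)‖ ≤ M) (hs : 0 ≤ s)
    (hst : s ≤ t) (ht : t ≤ N) : ‖polygonalLine u t - polygonalLine u s‖ ≤ M * (t - s) := by
  induction N generalizing t with
  | zero =>
    obtain rfl : s = t := le_antisymm hst (ht.trans (by simpa using hs))
    simp
  | succ N ih =>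
    have ih' {t : ℝ} := ih (t := t) fun j hj => hu j (hj.trans N.lt_succ_self)
    push_cast at ht
    obtain htN | hNt := le_total t N
    · exact ih' hst htN
    obtain hsN | hNs := le_total s N
    · calc ‖polygonalLine u t - polygonalLine u s‖
          ≤ ‖polygonalLine u t - polygonalLine u N‖ + ‖polygonalLine u N - polygonalLine u s‖ :=
            norm_sub_le_norm_sub_add_norm_sub _ _ _
        _ ≤ M * (t - N) + M * (N - s) :=
            add_le_add (norm_polygonalLine_sub_le_of_mem_Icc (hu N N.lt_succ_self)
              ⟨le_rfl, by linarith⟩ ⟨hNt, ht⟩ hNt) (ih' hsN le_rfl)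
        _ = M * (t - s) := by ring
    · exact norm_polygonalLine_sub_le_of_mem_Icc (hu N N.lt_succ_self)
        ⟨hNs, hst.trans ht⟩ ⟨hNt, ht⟩ hst

theorem norm_polygonalLine_sub_le {N : ℕ} (hu : ∀ j < N, ‖u (j + 1)‖ ≤ M)
    (hs : s ∈ Icc (0 : ℝ) N) (ht : t ∈ Icc (0 : ℝ) N) :
    ‖polygonalLine u t - polygonalLine u s‖ ≤ M * |t - s| := by
  obtain hst | hts := le_total s t
  · rw [abs_of_nonneg (sub_nonneg.2 hst)]
    exact norm_polygonalLine_sub_le_of_le hu hs.1 hst ht.2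
  · rw [abs_sub_comm, abs_of_nonneg (sub_nonneg.2 hts), norm_sub_rev]
    exact norm_polygonalLine_sub_le_of_le hu ht.1 hts hs.2

theorem coeFn_polygonalLine {Ω F : Type*} [MeasurableSpace Ω] {P : Measure Ω}
    [NormedAddCommGroup F] [NormedSpace ℝ F] {p : ENNReal} (U : ℕ → Lp F p P) (x : ℝ) :
    ⇑(polygonalLine U x) =ᵐ[P] fun ω => polygonalLine (fun j => U j ω) x := by
  rw [polygonalLine]
  filter_upwards [Lp.coeFn_add (∑ j ∈ Finset.range (⌊x⌋₊ + 1), U j)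
      ((x - ⌊x⌋₊) • U (⌊x⌋₊ + 1)), Lp.coeFn_fun_finsetSum (Finset.range (⌊x⌋₊ + 1)) U,
    Lp.coeFn_smul (x - ⌊x⌋₊) (U (⌊x⌋₊ + 1))] with ω hadd hsum hsmul
  rw [hadd, Pi.add_apply, hsum, hsmul, Pi.smul_apply, polygonalLine]

end PolygonalLine

section SquareIntegrable

theorem norm_sq_sum_smul_le_card {𝕜 E ι : Type*} [RCLike 𝕜] [SeminormedAddCommGroup E]
    [InnerProductSpace 𝕜 E] {v : ι → E} (hv : Orthonormal 𝕜 v) {c : ι → 𝕜} {S : Finset ι}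
    (hc : ∀ i ∈ S, ‖c i‖ ≤ 1) : ‖∑ i ∈ S, c i • v i‖ ^ 2 ≤ S.card := by
  have hpyth : ‖∑ i ∈ S, c i • v i‖ ^ 2 = ∑ i ∈ S, ‖c i‖ ^ 2 := by
    rw [@norm_sq_eq_re_inner 𝕜, hv.inner_sum, map_sum]
    exact Finset.sum_congr rfl fun i _ => by rw [RCLike.conj_mul]; norm_cast
  calc ‖∑ i ∈ S, c i • v i‖ ^ 2 = ∑ i ∈ S, ‖c i‖ ^ 2 := hpyth
    _ ≤ ∑ i ∈ S, 1 := Finset.sum_le_sum fun i hi => pow_le_one₀ (norm_nonneg _) (hc i hi)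
    _ = S.card := by simp

variable {Ω : Type*} [MeasurableSpace Ω] {P : Measure Ω}

theorem inner_eq_integral_mul {F G : Lp ℝ 2 P} {f g : Ω → ℝ} (hF : F =ᵐ[P] f) (hG : G =ᵐ[P] g) :
    inner ℝ F G = ∫ ω, f ω * g ω ∂P := by
  rw [L2.inner_def]
  refine integral_congr_ae ?_
  filter_upwards [hF, hG] with ω hFω hGω
  simp [hFω, hGω, mul_comm]

theorem norm_sq_eq_integral_sq {F : Lp ℝ 2 P} {f : Ω → ℝ} (hF : F =ᵐ[P] f) :
    ‖F‖ ^ 2 = ∫ ω, f ω ^ 2 ∂P := by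
  rw [← real_inner_self_eq_norm_sq, inner_eq_integral_mul hF hF]
  simp only [sq]

theorem orthonormal_toLp_of_pairwise_indepFun {ι : Type*} {ε : ι → Ω → ℝ}
    (hindep : Pairwise fun i j => IndepFun (ε i) (ε j) P) (hL2 : ∀ i, MemLp (ε i) 2 P)
    (hmean : ∀ i, ∫ ω, ε i ω ∂P = 0) (hvar : ∀ i, ∫ ω, ε i ω ^ 2 ∂P = 1) :
    Orthonormal ℝ fun i => (hL2 i).toLp (ε i) := by
  refine ⟨fun i => ?_, fun i j hij => ?_⟩
  · rw [← sq_eq_sq₀ (norm_nonneg _) zero_le_one, one_pow,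
      norm_sq_eq_integral_sq (hL2 i).coeFn_toLp, hvar]
  · change inner ℝ ((hL2 i).toLp (ε i)) ((hL2 j).toLp (ε j)) = 0
    rw [inner_eq_integral_mul (hL2 i).coeFn_toLp (hL2 j).coeFn_toLp,
      (hindep hij).integral_fun_mul_eq_mul_integral (hL2 i).1 (hL2 j).1, hmean i, zero_mul]

theorem orthonormal_toLp_of_pairwise_indepFun_of_identDistrib {ι Ω' : Type*} [MeasurableSpace Ω']
    {Q : Measure Ω'} {ε : ι → Ω → ℝ} {ξ : Ω' → ℝ}
    (hindep : Pairwise fun i j => IndepFun (ε i) (ε j) P)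
    (hid : ∀ i, IdentDistrib (ε i) ξ P Q) (hL2 : MemLp ξ 2 Q) (hmean : ∫ ω, ξ ω ∂Q = 0)
    (hvar : ∫ ω, ξ ω ^ 2 ∂Q = 1) :
    Orthonormal ℝ fun i => ((hid i).memLp_iff.2 hL2).toLp (ε i) :=
  orthonormal_toLp_of_pairwise_indepFun hindep _ (fun i => (hid i).integral_eq.trans hmean)
    fun i => (hid i).sq.integral_eq.trans hvar

theorem integral_sq_sum_mul_le_card {ι : Type*} {ε : ι → Ω → ℝ} (hL2 : ∀ i, MemLp (ε i) 2 P)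
    (hε : Orthonormal ℝ fun i => (hL2 i).toLp (ε i)) {c : ι → ℝ} {S : Finset ι}
    (hc : ∀ i ∈ S, |c i| ≤ 1) : ∫ ω, (∑ i ∈ S, c i * ε i ω) ^ 2 ∂P ≤ S.card := by
  have hsum : ⇑(∑ i ∈ S, c i • (hL2 i).toLp (ε i)) =ᵐ[P] fun ω => ∑ i ∈ S, c i * ε i ω := by
    refine (Lp.coeFn_fun_finsetSum S _).trans ?_
    have hterm : ∀ i ∈ S, ∀ᵐ ω ∂P, (c i • (hL2 i).toLp (ε i)) ω = c i * ε i ω := fun i _ => by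
      filter_upwards [Lp.coeFn_smul (c i) ((hL2 i).toLp (ε i)), (hL2 i).coeFn_toLp] with ω hs hω
      rw [hs, Pi.smul_apply, hω, smul_eq_mul]
    filter_upwards [(Finset.eventually_all S).2 hterm] with ω hω
    exact Finset.sum_congr rfl hω
  rw [← norm_sq_eq_integral_sq hsum]
  exact norm_sq_sum_smul_le_card hε hc

theorem integral_sq_polygonalLine_sub_le {y : ℕ → Ω → ℝ} (hy : ∀ k, MemLp (y k) 2 P) {N : ℕ}
    {C : ℝ} (hC : 0 ≤ C) (hyC : ∀ j < N, ∫ ω, y (j + 1) ω ^ 2 ∂P ≤ C) {s t : ℝ}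
    (hs : s ∈ Icc (0 : ℝ) N) (ht : t ∈ Icc (0 : ℝ) N) :
    ∫ ω, (polygonalLine (fun j => y j ω) t - polygonalLine (fun j => y j ω) s) ^ 2 ∂P
      ≤ C * (t - s) ^ 2 := by
  set Y : ℕ → Lp ℝ 2 P := fun j => (hy j).toLp (y j)
  have hYC (j : ℕ) (hj : j < N) : ‖Y (j + 1)‖ ≤ √C :=
    Real.le_sqrt_of_sq_le
      ((norm_sq_eq_integral_sq (hy (j + 1)).coeFn_toLp).trans_le (hyC j hj))
  have hline : ⇑(polygonalLine Y t - polygonalLine Y s) =ᵐ[P]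
      fun ω => polygonalLine (fun j => y j ω) t - polygonalLine (fun j => y j ω) s := by
    filter_upwards [Lp.coeFn_sub (polygonalLine Y t) (polygonalLine Y s), coeFn_polygonalLine Y t,
      coeFn_polygonalLine Y s, ae_all_iff.2 fun j => (hy j).coeFn_toLp] with ω hsub htω hsω hω
    simp only [hsub, Pi.sub_apply, htω, hsω, Y, hω]
  calc ∫ ω, (polygonalLine (fun j => y j ω) t - polygonalLine (fun j => y j ω) s) ^ 2 ∂P
      = ‖polygonalLine Y t - polygonalLine Y s‖ ^ 2 := (norm_sq_eq_integral_sq hline).symm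
    _ ≤ (√C * |t - s|) ^ 2 := by gcongr; exact norm_polygonalLine_sub_le hYC hs ht
    _ = C * (t - s) ^ 2 := by rw [mul_pow, Real.sq_sqrt hC, sq_abs]

end SquareIntegrable

section Autoregression

variable {Ω : Type*} [MeasurableSpace Ω] {P : Measure Ω} {θ : ℕ → ℝ} {ε y : ℕ → Ω → ℝ}

theorem memLp_of_autoregression {p : ENNReal} (hLp : ∀ k, MemLp (ε k) p P)
    (hy : ∀ k ω, y k ω = ε k ω + ∑ i ∈ Finset.Icc 1 k, θ i * y (k - i) ω) (k : ℕ) :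
    MemLp (y k) p P := by
  rw [funext fun ω => eq_sum_impulseResponse_mul (hy · ω) k]
  exact memLp_finsetSum _ fun l _ => (hLp l).const_mul _

theorem integral_sq_le_of_autoregression (hθ : ∀ k, ∑ i ∈ Finset.Icc 1 k, |θ i| ≤ 1)
    (hL2 : ∀ k, MemLp (ε k) 2 P) (hε : Orthonormal ℝ fun k => (hL2 k).toLp (ε k))
    (hy : ∀ k ω, y k ω = ε k ω + ∑ i ∈ Finset.Icc 1 k, θ i * y (k - i) ω) (k : ℕ) :
    ∫ ω, y k ω ^ 2 ∂P ≤ k + 1 := by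
  have hψ (l : ℕ) (_ : l ∈ Finset.range (k + 1)) : |impulseResponse θ (k - l)| ≤ 1 :=
    norm_impulseResponse_le_one (K := ℝ) hθ (k - l)
  simp only [fun ω => eq_sum_impulseResponse_mul (hy · ω) k]
  simpa using integral_sq_sum_mul_le_card hL2 hε hψ

theorem integral_sq_rescaled_polygonalLine_sub_le (hθ : ∀ k, ∑ i ∈ Finset.Icc 1 k, |θ i| ≤ 1)
    (hL2 : ∀ k, MemLp (ε k) 2 P) (hε : Orthonormal ℝ fun k => (hL2 k).toLp (ε k))
    (hy : ∀ k ω, y k ω = ε k ω + ∑ i ∈ Finset.Icc 1 k, θ i * y (k - i) ω) (b : ℝ) {n : ℕ}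
    (hn : 1 ≤ n) {s t : ℝ} (hs : s ∈ Icc (0 : ℝ) 1) (ht : t ∈ Icc (0 : ℝ) 1) :
    ∫ ω, (b / √n * polygonalLine (fun j => y j ω) (n * t)
        - b / √n * polygonalLine (fun j => y j ω) (n * s)) ^ 2 ∂P
      ≤ 2 * (n * b) ^ 2 * (t - s) ^ 2 := by
  have hn' : (1 : ℝ) ≤ n := mod_cast hn
  have hmem {r : ℝ} (hr : r ∈ Icc (0 : ℝ) 1) : n * r ∈ Icc (0 : ℝ) n :=
    ⟨mul_nonneg n.cast_nonneg hr.1, mul_le_of_le_one_right n.cast_nonneg hr.2⟩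
  have hmoment (j : ℕ) (hj : j < n) : ∫ ω, y (j + 1) ω ^ 2 ∂P ≤ n + 1 :=
    (integral_sq_le_of_autoregression hθ hL2 hε hy (j + 1)).trans
      (by gcongr; exact_mod_cast hj)
  simp only [← mul_sub, mul_pow _ _ 2, integral_const_mul, div_pow, Real.sq_sqrt n.cast_nonneg]
  calc b ^ 2 / n * ∫ ω, (polygonalLine (fun j => y j ω) (n * t)
          - polygonalLine (fun j => y j ω) (n * s)) ^ 2 ∂P
      ≤ b ^ 2 / n * ((n + 1) * (n * t - n * s) ^ 2) := by
        gcongr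
        exact integral_sq_polygonalLine_sub_le (memLp_of_autoregression hL2 hy) (by positivity)
          hmoment (hmem hs) (hmem ht)
    _ = (n + 1) * (n * b ^ 2 * (t - s) ^ 2) := by field_simp
    _ ≤ (n + n) * (n * b ^ 2 * (t - s) ^ 2) := by gcongr
    _ = 2 * (n ^ 2 * b ^ 2) * (t - s) ^ 2 := by ring

end Autoregression

theorem sum_abs_le_tsum {ι : Type*} {φ : ι → ℝ} (hφ : ∀ i, 0 ≤ φ i) (hsum : ∑' i, φ i ≠ 0)
    (S : Finset ι) : ∑ i ∈ S, |φ i| ≤ ∑' i, φ i := by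
  simp only [abs_of_nonneg (hφ _)]
  have hsummable : Summable φ := not_imp_comm.1 tsum_eq_zero_of_not_summable hsum
  exact hsummable.sum_le_tsum S fun i _ => hφ i

theorem donsker_line_kolmogorov_light_tail_general
    {Ω : Type*} [MeasurableSpace Ω] {P : Measure Ω}
    {φ : ℕ → ℝ} (hφ : ∀ k, ∑ i ∈ Finset.Icc 1 k, |φ i| ≤ 1)
    {a : ℕ → ℝ} (ha : ∀ n, 1 ≤ n → |a n| ≤ 1)
    (haBdd : BddAbove (Set.range fun n : ℕ => |(n : ℝ) * (1 - a n)|))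
    {ε : ℕ → Ω → ℝ} (hεL2 : ∀ k, MemLp (ε k) 2 P)
    (hε : Orthonormal ℝ fun k => (hεL2 k).toLp (ε k))
    {y : ℕ → ℕ → Ω → ℝ} (hy0 : ∀ n, y n 0 = ε 0)
    (hyrec : ∀ n k, 1 ≤ k → ∀ ω,
      y n k ω = ε k ω + ∑ i ∈ Finset.Icc 1 k, a n * φ i * y n (k - i) ω)
    {Z : ℕ → ℝ → Ω → ℝ}
    (hZ : ∀ n t ω, Z n t ω = (1 - a n) / Real.sqrt n *
      ((∑ j ∈ Finset.range (⌊(n : ℝ) * t⌋₊ + 1), y n j ω) +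
        ((n : ℝ) * t - (⌊(n : ℝ) * t⌋₊ : ℝ)) * y n (⌊(n : ℝ) * t⌋₊ + 1) ω)) :
    ∃ c > 0, ∀ n, 1 ≤ n → ∀ s ∈ Set.Icc (0 : ℝ) 1, ∀ t ∈ Set.Icc (0 : ℝ) 1,
      ∫ ω, |Z n t ω - Z n s ω| ^ 2 ∂P ≤ c * |t - s| ^ 2 := by
  obtain ⟨B, hB⟩ := haBdd
  refine ⟨2 * B ^ 2 + 1, by positivity, fun n hn s hs t ht => ?_⟩
  have hθ (k : ℕ) : ∑ i ∈ Finset.Icc 1 k, |a n * φ i| ≤ 1 := by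
    simp only [abs_mul, ← Finset.mul_sum]
    exact mul_le_one₀ (ha n hn) (Finset.sum_nonneg fun i _ => abs_nonneg _) (hφ k)
  have hy (k : ℕ) (ω : Ω) :
      y n k ω = ε k ω + ∑ i ∈ Finset.Icc 1 k, a n * φ i * y n (k - i) ω := by
    obtain rfl | hk := k.eq_zero_or_pos
    · simp [hy0]
    · exact hyrec n k hk ω
  have hline (r : ℝ) (ω : Ω) :
      Z n r ω = (1 - a n) / √n * polygonalLine (fun j => y n j ω) (n * r) := hZ n r ω
  have hbound : (n * (1 - a n)) ^ 2 ≤ B ^ 2 := sq_le_sq.2 ((hB ⟨n, rfl⟩).trans (le_abs_self B))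
  simp only [sq_abs, hline]
  calc _ ≤ 2 * (n * (1 - a n)) ^ 2 * (t - s) ^ 2 :=
        integral_sq_rescaled_polygonalLine_sub_le hθ hεL2 hε hy _ hn hs ht
    _ ≤ (2 * B ^ 2 + 1) * (t - s) ^ 2 := by gcongr; linarith

/-- Kolmogorov moment bound for the Donsker line, light-tail case:
`E[|Z^n_t − Z^n_s|²] ≤ c |t−s|²`. -/
theorem donsker_line_kolmogorov_light_tail
    {Ω : Type*} [MeasurableSpace Ω] (P : Measure Ω) [IsProbabilityMeasure P]
    (φ : ℕ → ℝ) (hφnn : ∀ i, 0 ≤ φ i) (hφ0 : φ 0 = 0) (hφsum : ∑' i : ℕ, φ i = 1)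
    (m : ℝ) (hm : HasSum (fun i : ℕ => (i : ℝ) * φ i) m)
    (a : ℕ → ℝ) (ha : ∀ n, 1 ≤ n → 0 < a n ∧ a n < 1)
    (lam : ℝ) (hlam : 0 < lam)
    (haconv : Tendsto (fun n : ℕ => (n : ℝ) * (1 - a n)) atTop (nhds lam))
    -- the `ε_k` are iid, square integrable, centered with unit variance
    (ε : ℕ → Ω → ℝ) (hεmeas : ∀ k, Measurable (ε k))
    (hεindep : iIndepFun ε P)
    (hεid : ∀ k, Measure.map (ε k) P = Measure.map (ε 0) P)
    (hεL2 : MemLp (ε 0) 2 P)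
    (hεmean : ∫ ω, ε 0 ω ∂P = 0)
    (hεvar : ∫ ω, (ε 0 ω) ^ 2 ∂P = 1)
    (y : ℕ → ℕ → Ω → ℝ)
    (hy0 : ∀ n, y n 0 = ε 0)
    (hyrec : ∀ n k, 1 ≤ k → ∀ ω,
      y n k ω = ε k ω + ∑ i ∈ Finset.Icc 1 k, a n * φ i * y n (k - i) ω)
    -- the renormalized Donsker line
    (Z : ℕ → ℝ → Ω → ℝ)
    (hZ : ∀ n t ω, Z n t ω = (1 - a n) / Real.sqrt n *
      ((∑ j ∈ Finset.range (⌊(n : ℝ) * t⌋₊ + 1), y n j ω) +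
        ((n : ℝ) * t - (⌊(n : ℝ) * t⌋₊ : ℝ)) * y n (⌊(n : ℝ) * t⌋₊ + 1) ω))
    : ∃ c > 0, ∀ n, 1 ≤ n → ∀ s ∈ Set.Icc (0:ℝ) 1, ∀ t ∈ Set.Icc (0:ℝ) 1,
        ∫ ω, |Z n t ω - Z n s ω| ^ 2 ∂P ≤ c * |t - s| ^ 2 := by
  have hid (k : ℕ) : IdentDistrib (ε k) (ε 0) P P :=
    ⟨(hεmeas k).aemeasurable, (hεmeas 0).aemeasurable, hεid k⟩
  exact donsker_line_kolmogorov_light_tail_general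
    (fun k => hφsum ▸ sum_abs_le_tsum hφnn (hφsum ▸ one_ne_zero) (Finset.Icc 1 k))
    (fun n hn => (abs_of_pos (ha n hn).1).trans_le (ha n hn).2.le) haconv.abs.bddAbove_range _
    (orthonormal_toLp_of_pairwise_indepFun_of_identDistrib (fun _ _ => hεindep.indepFun) hid hεL2
      hεmean hεvar) hy0 hyrec hZ
end
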